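/- arXiv:1201.4468 — 5 statements merged into one kernel-verified Lean document; each statement's English description precedes it below -/
import Mathlib

section
/- Let ω be a Sturmian infinite word. Then every factor u of ω has exactly two distinct return words in ω. -/
/-- `w_k` equals `⌊(k+1)α+ρ⌋ - ⌊kα+ρ⌋` for all `k < |w|` (letter `true` stands for `1`). -/
def DefinesWord (α ρ : ℝ) (w : List Bool) : Prop :=
  ∀ k : ℕ, (h : k < w.length) →
    (if w.get ⟨k, h⟩ then (1 : ℤ) else 0) = ⌊((k : ℝ) + 1) * α + ρ⌋ - ⌊(k : ℝ) * α + ρ⌋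

/-- A finite Sturmian word. -/
def IsFiniteSturmian (w : List Bool) : Prop :=
  ∃ α ρ : ℝ, α ∈ Set.Ioo (0 : ℝ) 1 ∧ ρ ∈ Set.Ioo (0 : ℝ) 1 ∧ DefinesWord α ρ w

/-- `A n`, the set of finite Sturmian words of length `n`. -/
def sturmianWords (n : ℕ) : Set (List Bool) :=
  {w | w.length = n ∧ IsFiniteSturmian w}

/-- `(i,j)` is an integer point of the line `y = αx + ρ` (here `l = (α,ρ)`). -/
def IsIntegerPoint (l : ℝ × ℝ) (p : ℤ × ℤ) : Prop :=
  (p.2 : ℝ) = l.1 * p.1 + l.2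

/-- `Z_k(ℓ)`: the number of integer points `(i,j)` of `ℓ` with `0 ≤ i ≤ k`. -/
noncomputable def Zpts (k : ℝ) (l : ℝ × ℝ) : ℕ :=
  {p : ℤ × ℤ | 0 ≤ p.1 ∧ (p.1 : ℝ) ≤ k ∧ IsIntegerPoint l p}.ncard

/-- The set `S_n` of lines `(α,ρ)` with `α, ρ ∈ (0,1)`. -/
def Sset : Set (ℝ × ℝ) := Set.Ioo 0 1 ×ˢ Set.Ioo 0 1

/-- The set `L_n` of lines `(α,ρ)` with `α, ρ ∈ [0,1]` and `Z_n(ℓ) ≥ 2`. -/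
def Lset (n : ℕ) : Set (ℝ × ℝ) :=
  {l | l.1 ∈ Set.Icc (0 : ℝ) 1 ∧ l.2 ∈ Set.Icc (0 : ℝ) 1 ∧ 2 ≤ Zpts n l}

/-- The set `m(ℓ) ⊆ A_n`. -/
def mImage (n : ℕ) (l : ℝ × ℝ) : Set (List Bool) :=
  {w | w ∈ sturmianWords n ∧ ∃ l' : ℝ × ℝ, l' ∈ Sset ∧ DefinesWord l'.1 l'.2 w ∧
    (¬ ∃ p : ℤ × ℤ, 0 ≤ p.1 ∧ (p.1 : ℝ) ≤ n ∧
        min (l.1 * p.1 + l.2) (l'.1 * p.1 + l'.2) < (p.2 : ℝ) ∧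
        (p.2 : ℝ) < max (l.1 * p.1 + l.2) (l'.1 * p.1 + l'.2)) ∧
    (∃ p1 p2 : ℤ × ℤ, IsIntegerPoint l p1 ∧ IsIntegerPoint l p2 ∧
      0 ≤ p1.1 ∧ (p1.1 : ℝ) ≤ n / 2 ∧ (n / 2 : ℝ) < (p2.1 : ℝ) ∧ (p2.1 : ℝ) ≤ n ∧
      (p1.2 : ℝ) < l'.1 * p1.1 + l'.2 ∧ (p2.2 : ℝ) < l'.1 * p2.1 + l'.2)}

/-- The word `w` goes through the grid point `p = (i,j)`:
exactly `j` of the first `i` letters of `w` equal `1`. -/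
def GoesThrough (w : List Bool) (p : ℤ × ℤ) : Prop :=
  ((w.take p.1.toNat).count true : ℤ) = p.2

/-- The word `u` occurs in the infinite word `ω` at position `i`. -/
def OccursAt (u : List Bool) (ω : ℕ → Bool) (i : ℕ) : Prop :=
  ∀ k : ℕ, (h : k < u.length) → u.get ⟨k, h⟩ = ω (i + k)

/-- `u` is a factor of the infinite word `ω`. -/
def IsFactor (u : List Bool) (ω : ℕ → Bool) : Prop := ∃ i, OccursAt u ω i

/-- `ω` is a Sturmian infinite word: it has exactly `n+1` factors of length `n` for all `n`. -/
def IsSturmian (ω : ℕ → Bool) : Prop :=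
  ∀ n : ℕ, {u : List Bool | u.length = n ∧ IsFactor u ω}.ncard = n + 1

/-- `v` is a return word of `u` in `ω`. -/
def IsReturnWord (ω : ℕ → Bool) (u v : List Bool) : Prop :=
  v ≠ [] ∧ IsFactor (v ++ u) ω ∧ u <+: v ++ u ∧ u <:+ v ++ u ∧
    {i : ℕ | i + u.length ≤ (v ++ u).length ∧ u <+: (v ++ u).drop i}.ncard = 2

/-!
By the Morse–Hedlund theorem a word is not eventually periodic exactly when it has more than `n`
factors of length `n` for every `n`. So a Sturmian word is not eventually periodic, and it is
recurrent: a factor absent from some tail would leave that tail too few factors. It also has a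
single right special factor of each length, since every right special factor of length `n`
contributes to the growth of the complexity from `n` to `n + 1`.

Extend a factor `u` to the right as long as the continuation is forced. This ends at a right special
factor `f` with the same occurrences as `u`, hence the same return words. From an occurrence of `f`
on, the letter following `f` determines the word until a right special factor of length `|f|`, which
can only be `f` itself, is met again. So the return words of `f` correspond to the letters that can
follow `f`, and over a binary alphabet there are two of them.
-/

theorem ncard_image_eq_ncard_image_of_eq_iff_eq {ι β γ : Type*} {F : ι → β} {G : ι → γ}
    {s : Set ι} (h : ∀ x ∈ s, ∀ y ∈ s, F x = F y ↔ G x = G y) :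
    (F '' s).ncard = (G '' s).ncard := by
  refine Set.ncard_congr (fun _ hb => G hb.choose) ?_ ?_ ?_
  · exact fun b hb => Set.mem_image_of_mem G hb.choose_spec.1
  · intro b c hb hc hbc
    rw [← hb.choose_spec.2, ← hc.choose_spec.2]
    exact (h _ hb.choose_spec.1 _ hc.choose_spec.1).2 hbc
  · rintro _ ⟨x, hx, rfl⟩
    have hb : F x ∈ F '' s := Set.mem_image_of_mem F hx
    exact ⟨F x, hb, (h _ hb.choose_spec.1 _ hx).1 hb.choose_spec.2⟩

section Factors

variable {α : Type*}

/-- The factor of length `n` of the infinite word `w` starting at position `i`. -/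
def factorAt (w : ℕ → α) (n i : ℕ) : List α := (List.range n).map fun t => w (i + t)

/-- The positions at which the finite word `f` occurs in the infinite word `w`. -/
def occurrences (w : ℕ → α) (f : List α) : Set ℕ := {i | factorAt w f.length i = f}

/-- The letters that follow some occurrence of `f` in `w`: the right extensions of `f`. -/
def nextLetters (w : ℕ → α) (f : List α) : Set α :=
  (fun i => w (i + f.length)) '' occurrences w f

variable {w : ℕ → α} {f g : List α} {a : α} {i j k m n : ℕ}

@[simp]
theorem length_factorAt : (factorAt w n i).length = n := by simp [factorAt]

theorem factorAt_eq_factorAt_iff :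
    factorAt w n i = factorAt w n j ↔ ∀ t < n, w (i + t) = w (j + t) := by
  simp [factorAt]

theorem factorAt_succ : factorAt w (n + 1) i = factorAt w n i ++ [w (i + n)] := by
  simp [factorAt, List.range_succ]

theorem factorAt_add : factorAt w (m + n) i = factorAt w m i ++ factorAt w n (i + m) := by
  simp [factorAt, List.range_add, Function.comp_def, add_assoc]

theorem factorAt_add_eq_factorAt_add_iff :
    factorAt w (m + n) i = factorAt w (m + n) j ↔
      factorAt w m i = factorAt w m j ∧ factorAt w n (i + m) = factorAt w n (j + m) := by
  rw [factorAt_add, factorAt_add, List.append_eq_append_iff_of_size_eq_left (by simp)]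

theorem factorAt_succ_eq_factorAt_succ_iff :
    factorAt w (n + 1) i = factorAt w (n + 1) j ↔
      factorAt w n i = factorAt w n j ∧ w (i + n) = w (j + n) := by
  simp [factorAt_add_eq_factorAt_add_iff, factorAt_eq_factorAt_iff (n := 1)]

theorem take_drop_factorAt (h : k + m ≤ n) :
    ((factorAt w n i).drop k).take m = factorAt w m (i + k) := by
  obtain ⟨l, rfl⟩ := Nat.exists_eq_add_of_le h
  rw [add_assoc, factorAt_add, List.drop_left' length_factorAt, factorAt_add,
    List.take_left' length_factorAt]

theorem finite_range_factorAt [Finite α] (w : ℕ → α) (n : ℕ) :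
    (Set.range (factorAt w n)).Finite :=
  (List.finite_length_eq α n).subset <| Set.range_subset_iff.2 fun _ => length_factorAt

theorem mem_occurrences : i ∈ occurrences w f ↔ factorAt w f.length i = f := Iff.rfl

theorem mem_occurrences_factorAt :
    i ∈ occurrences w (factorAt w n j) ↔ factorAt w n i = factorAt w n j := by
  simp [mem_occurrences]

theorem mem_occurrences_append :
    i ∈ occurrences w (f ++ g) ↔ i ∈ occurrences w f ∧ i + f.length ∈ occurrences w g := by
  simp only [mem_occurrences, List.length_append, factorAt_add]
  exact List.append_eq_append_iff_of_size_eq_left length_factorAt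

theorem isPrefix_drop_iff_mem_occurrences (hi : i ∈ occurrences w f)
    (hk : k + g.length ≤ f.length) :
    g <+: f.drop k ↔ i + k ∈ occurrences w g := by
  rw [List.prefix_iff_eq_take, ← mem_occurrences.1 hi, take_drop_factorAt hk, mem_occurrences,
    eq_comm]

theorem concat_mem_range_factorAt_iff :
    f ++ [a] ∈ Set.range (factorAt w (n + 1)) ↔ f.length = n ∧ a ∈ nextLetters w f := by
  constructor
  · rintro ⟨i, hi⟩
    rw [factorAt_succ, List.append_singleton_inj] at hi
    obtain ⟨rfl, rfl⟩ := hi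
    exact ⟨length_factorAt, i, mem_occurrences_factorAt.2 rfl, by simp⟩
  · rintro ⟨rfl, i, hi, rfl⟩
    exact ⟨i, by rw [factorAt_succ, mem_occurrences.1 hi]⟩

end Factors

section Complexity

variable {α : Type*}

/-- A right special factor: a word with at least two right extensions in `w`. -/
def IsRightSpecial (w : ℕ → α) (f : List α) : Prop := (nextLetters w f).Nontrivial

/-- The right special factors of `w` of length `n`. -/
def rightSpecialFactors (w : ℕ → α) (n : ℕ) : Set (List α) :=
  {f | f.length = n ∧ IsRightSpecial w f}

/-- The factor complexity of `w`: the number of its factors of length `n`. Over an infinite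
alphabet the value is `0` when there are infinitely many of them. -/
noncomputable def complexity (w : ℕ → α) (n : ℕ) : ℕ := (Set.range (factorAt w n)).ncard

/-- Eventual periodicity of an infinite word, expressed as the equality of two of its tails. -/
def EventuallyPeriodic (w : ℕ → α) : Prop := ∃ i j, i < j ∧ ∀ t, w (i + t) = w (j + t)

/-- Recurrence of an infinite word: every occurrence of a factor is followed by a later one. -/
def Recurrent (w : ℕ → α) : Prop := ∀ n i, ∃ j > i, factorAt w n j = factorAt w n i

variable {w : ℕ → α} {d i j n : ℕ}

theorem isRightSpecial_factorAt (h : factorAt w n i = factorAt w n j)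
    (hne : w (i + n) ≠ w (j + n)) : IsRightSpecial w (factorAt w n i) :=
  ⟨w (i + n), ⟨i, by simp [mem_occurrences]⟩, w (j + n), ⟨j, by simp [mem_occurrences, h]⟩, hne⟩

theorem factorAt_add_eq_of_not_isRightSpecial (h : factorAt w n i = factorAt w n j)
    (hd : ∀ s < d, ¬ IsRightSpecial w (factorAt w n (i + s))) :
    factorAt w (n + d) i = factorAt w (n + d) j := by
  induction d with
  | zero => exact h
  | succ d ih =>
    have hagree := ih fun s hs => hd s (by omega)
    have hlast : factorAt w n (i + d) = factorAt w n (j + d) := by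
      rw [add_comm, factorAt_add_eq_factorAt_add_iff] at hagree
      exact hagree.2
    refine factorAt_succ_eq_factorAt_succ_iff.2 ⟨hagree, ?_⟩
    by_contra hne
    refine hd d (by omega) (isRightSpecial_factorAt hlast ?_)
    rwa [add_assoc, add_assoc, add_comm d]

theorem rightSpecialFactors_nonempty [Finite α] (hw : ¬ EventuallyPeriodic w) (n : ℕ) :
    (rightSpecialFactors w n).Nonempty := by
  obtain ⟨i, -, j, -, hij, h⟩ := Set.infinite_univ.exists_lt_map_eq_of_mapsTo
    (fun i _ => Set.mem_range_self i) (finite_range_factorAt w n)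
  by_contra hempty
  have hns (s : ℕ) : ¬ IsRightSpecial w (factorAt w n s) :=
    fun hs => hempty ⟨_, length_factorAt, hs⟩
  refine hw ⟨i, j, hij, fun t => ?_⟩
  have htail := factorAt_add_eq_of_not_isRightSpecial h (d := t + 1) fun s _ => hns (i + s)
  exact factorAt_eq_factorAt_iff.1 htail t (by omega)

theorem finite_rightSpecialFactors [Finite α] (w : ℕ → α) (n : ℕ) :
    (rightSpecialFactors w n).Finite :=
  (List.finite_length_eq α n).subset fun _ hf => hf.1

theorem complexity_add_ncard_rightSpecialFactors_le [Finite α] (w : ℕ → α) (n : ℕ) :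
    complexity w n + (rightSpecialFactors w n).ncard ≤ complexity w (n + 1) := by
  have : Nonempty α := ⟨w 0⟩
  have hnext : ∀ f ∈ Set.range (factorAt w n), ∃ a, a ∈ nextLetters w f := by
    rintro _ ⟨i, rfl⟩
    exact ⟨_, i, mem_occurrences_factorAt.2 rfl, rfl⟩
  choose! a ha using hnext
  have hother : ∀ f ∈ rightSpecialFactors w n, ∃ b ∈ nextLetters w f, b ≠ a f :=
    fun f hf => hf.2.exists_ne (a f)
  choose! b hb hba using hother
  have hinj (c : List α → α) : Function.Injective fun f => f ++ [c f] :=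
    fun f g h => (List.append_singleton_inj.1 h).1
  have hdisj : Disjoint ((fun f => f ++ [a f]) '' Set.range (factorAt w n))
      ((fun f => f ++ [b f]) '' rightSpecialFactors w n) := by
    rw [Set.disjoint_left]
    rintro _ ⟨f, -, rfl⟩ ⟨g, hg, h⟩
    obtain ⟨rfl, hbg⟩ := List.append_singleton_inj.1 h
    exact hba g hg hbg
  have hsub : (fun f => f ++ [a f]) '' Set.range (factorAt w n) ∪
      (fun f => f ++ [b f]) '' rightSpecialFactors w n ⊆ Set.range (factorAt w (n + 1)) := by
    rintro _ (⟨f, hf, rfl⟩ | ⟨f, hf, rfl⟩)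
    · refine concat_mem_range_factorAt_iff.2 ⟨?_, ha f hf⟩
      obtain ⟨i, rfl⟩ := hf
      exact length_factorAt
    · exact concat_mem_range_factorAt_iff.2 ⟨hf.1, hb f hf⟩
  have hfin := finite_range_factorAt w (n + 1)
  rw [complexity, complexity, ← Set.ncard_image_of_injective _ (hinj a),
    ← Set.ncard_image_of_injective (rightSpecialFactors w n) (hinj b), ← Set.ncard_union_eq hdisj
      (hfin.subset (Set.subset_union_left.trans hsub))
      (hfin.subset (Set.subset_union_right.trans hsub))]
  exact Set.ncard_le_ncard hsub hfin

theorem lt_complexity [Finite α] (hw : ¬ EventuallyPeriodic w) (n : ℕ) : n < complexity w n := by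
  induction n with
  | zero => exact (Set.ncard_pos (finite_range_factorAt w 0)).2 (Set.range_nonempty _)
  | succ n ih =>
    have hpos := (Set.ncard_pos (finite_rightSpecialFactors w n)).2
      (rightSpecialFactors_nonempty hw n)
    have hstep := complexity_add_ncard_rightSpecialFactors_le w n
    omega

theorem complexity_le_of_tail_eq (hij : i < j) (h : ∀ t, w (i + t) = w (j + t)) (n : ℕ) :
    complexity w n ≤ j := by
  have hreduce (k : ℕ) : ∃ l < j, ∀ t, w (k + t) = w (l + t) := by
    induction k using Nat.strong_induction_on with
    | _ k ih =>
      rcases lt_or_ge k j with hk | hk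
      · exact ⟨k, hk, fun _ => rfl⟩
      · obtain ⟨l, hl, hlt⟩ := ih (k - (j - i)) (by omega)
        refine ⟨l, hl, fun t => ?_⟩
        rw [← hlt, show k + t = j + (k - j + t) by omega, ← h]
        congr 1
        omega
  have hsub : Set.range (factorAt w n) ⊆ factorAt w n '' Set.Iio j := by
    rintro _ ⟨k, rfl⟩
    obtain ⟨l, hl, hlt⟩ := hreduce k
    exact ⟨l, hl, factorAt_eq_factorAt_iff.2 fun t _ => (hlt t).symm⟩
  calc complexity w n ≤ (factorAt w n '' Set.Iio j).ncard :=
        Set.ncard_le_ncard hsub ((Set.finite_Iio j).image _)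
    _ ≤ (Set.Iio j).ncard := Set.ncard_image_le (Set.finite_Iio j)
    _ = j := by simp [Set.ncard_eq_toFinset_card']

/-- The **Morse–Hedlund theorem**. -/
theorem eventuallyPeriodic_iff_exists_complexity_le [Finite α] :
    EventuallyPeriodic w ↔ ∃ n, complexity w n ≤ n := by
  constructor
  · rintro ⟨i, j, hij, h⟩
    exact ⟨j, complexity_le_of_tail_eq hij h j⟩
  · rintro ⟨n, hn⟩
    by_contra hw
    exact (lt_complexity hw n).not_ge hn

theorem rightSpecialFactors_subsingleton [Finite α] (hw : ¬ EventuallyPeriodic w)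
    (hn : complexity w (n + 1) ≤ n + 2) : (rightSpecialFactors w n).Subsingleton := by
  have hstep := complexity_add_ncard_rightSpecialFactors_le w n
  have hlt := lt_complexity hw n
  have : Finite (rightSpecialFactors w n) := finite_rightSpecialFactors w n
  exact Set.ncard_le_one_iff_subsingleton.1 (by omega)

theorem recurrent_of_complexity_le [Finite α] (hw : ¬ EventuallyPeriodic w)
    (hc : ∀ n, complexity w n ≤ n + 1) : Recurrent w := by
  intro n i
  by_contra! hlast
  let tail : ℕ → α := fun t => w (i + 1 + t)
  have hshift (k : ℕ) : factorAt tail n k = factorAt w n (i + 1 + k) := by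
    simp [factorAt, tail, add_assoc]
  have hssub : Set.range (factorAt tail n) ⊂ Set.range (factorAt w n) := by
    refine (Set.ssubset_iff_of_subset ?_).2 ⟨factorAt w n i, ⟨i, rfl⟩, ?_⟩
    · rintro _ ⟨k, rfl⟩
      exact ⟨i + 1 + k, (hshift k).symm⟩
    · rintro ⟨k, hk⟩
      exact hlast (i + 1 + k) (by omega) (by rw [← hshift, hk])
  have hlt : complexity tail n < complexity w n :=
    Set.ncard_lt_ncard hssub (finite_range_factorAt w n)
  have hle : complexity tail n ≤ n := Nat.le_of_lt_succ (hlt.trans_le (hc n))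
  obtain ⟨k, l, hkl, h⟩ := eventuallyPeriodic_iff_exists_complexity_le.2 ⟨n, hle⟩
  exact hw ⟨i + 1 + k, i + 1 + l, by omega, fun t => by simpa [tail, add_assoc] using h t⟩

end Complexity

section ReturnWords

variable {α : Type*}

/-- The distances from position `i` to the later occurrences of `f` in `w`. -/
def returnTimes (w : ℕ → α) (f : List α) (i : ℕ) : Set ℕ :=
  {d | 0 < d ∧ i + d ∈ occurrences w f}

/-- The distance from position `i` to the next occurrence of `f` in `w`, or `0` if there is none. -/
noncomputable def returnTime (w : ℕ → α) (f : List α) (i : ℕ) : ℕ :=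
  sInf (returnTimes w f i)

/-- The return word of `f` read from position `i` of `w` to the next occurrence of `f`. -/
noncomputable def returnWordAt (w : ℕ → α) (f : List α) (i : ℕ) : List α :=
  factorAt w (returnTime w f i) i

/-- The return words of `f` in `w`, for words over any alphabet; for a recurrent binary word they
are the words satisfying `IsReturnWord`. -/
def returnWords (w : ℕ → α) (f : List α) : Set (List α) :=
  returnWordAt w f '' occurrences w f

variable {w : ℕ → α} {f u v : List α} {d i j : ℕ}

theorem exists_isRightSpecial_occurrences_eq (hw : ¬ EventuallyPeriodic w) (hrec : Recurrent w)
    (hi : i ∈ occurrences w u) : ∃ f, IsRightSpecial w f ∧ occurrences w f = occurrences w u := by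
  classical
  have hbranch : ∃ t, ∃ j ∈ occurrences w u, w (j + t) ≠ w (i + t) := by
    obtain ⟨j, hj, h⟩ := hrec u.length i
    by_contra! hall
    exact hw ⟨i, j, hj, fun t => (hall t j (h.trans hi)).symm⟩
  obtain ⟨j, hj, hne⟩ := Nat.find_spec hbranch
  set n := Nat.find hbranch
  have hforced : ∀ k ∈ occurrences w u, ∀ t < n, w (k + t) = w (i + t) := by
    intro k hk t ht
    by_contra hkt
    exact Nat.find_min hbranch ht ⟨k, hk, hkt⟩
  have hle : u.length ≤ n := by
    by_contra! hlt
    exact hne (factorAt_eq_factorAt_iff.1 (hj.trans hi.symm) n hlt)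
  refine ⟨factorAt w n i, ?_, Set.ext fun k => ?_⟩
  · exact isRightSpecial_factorAt
      (factorAt_eq_factorAt_iff.2 fun t ht => (hforced j hj t ht).symm) hne.symm
  · rw [mem_occurrences_factorAt, factorAt_eq_factorAt_iff]
    refine ⟨fun h => ?_, hforced k⟩
    exact (factorAt_eq_factorAt_iff.2 fun t ht => h t (ht.trans_le hle)).trans hi

theorem returnWords_congr (h : occurrences w f = occurrences w u) :
    returnWords w f = returnWords w u := by
  have hword : returnWordAt w f = returnWordAt w u := by
    funext i
    rw [returnWordAt, returnWordAt, returnTime, returnTime, returnTimes, returnTimes, h]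
  rw [returnWords, returnWords, hword, h]

theorem Recurrent.isLeast_returnTime (hw : Recurrent w) (hi : i ∈ occurrences w f) :
    IsLeast (returnTimes w f i) (returnTime w f i) := by
  refine ⟨Nat.sInf_mem ?_, fun _ => Nat.sInf_le⟩
  obtain ⟨j, hj, h⟩ := hw f.length i
  exact ⟨j - i, by omega, by rw [Nat.add_sub_cancel' hj.le]; exact h.trans hi⟩

theorem factorAt_add_eq_of_isLeast_returnTimes
    (hf : rightSpecialFactors w f.length ⊆ {f})
    (hi : i ∈ occurrences w f) (hj : j ∈ occurrences w f)
    (hnext : w (i + f.length) = w (j + f.length)) (hd : IsLeast (returnTimes w f i) d) :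
    factorAt w (f.length + d) i = factorAt w (f.length + d) j := by
  obtain ⟨e, rfl⟩ : ∃ e, d = 1 + e := Nat.exists_eq_add_of_le hd.1.1
  have hstart : factorAt w (1 + f.length) i = factorAt w (1 + f.length) j := by
    rw [add_comm, factorAt_succ_eq_factorAt_succ_iff]
    exact ⟨hi.trans hj.symm, hnext⟩
  rw [factorAt_add_eq_factorAt_add_iff] at hstart
  rw [add_left_comm, factorAt_add_eq_factorAt_add_iff]
  refine ⟨hstart.1, factorAt_add_eq_of_not_isRightSpecial hstart.2 fun s hs hspecial => ?_⟩
  have hreturn : 1 + s ∈ returnTimes w f i :=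
    ⟨by omega, by
      simpa only [mem_occurrences, add_assoc] using
        Set.mem_singleton_iff.1 (hf ⟨length_factorAt, hspecial⟩)⟩
  have := hd.2 hreturn
  omega

theorem returnTime_le_of_next_eq (hw : Recurrent w)
    (hf : rightSpecialFactors w f.length ⊆ {f})
    (hi : i ∈ occurrences w f) (hj : j ∈ occurrences w f)
    (hnext : w (i + f.length) = w (j + f.length)) : returnTime w f j ≤ returnTime w f i := by
  have hd := hw.isLeast_returnTime hi
  have hagree := factorAt_add_eq_of_isLeast_returnTimes hf hi hj hnext hd
  rw [add_comm, factorAt_add_eq_factorAt_add_iff] at hagree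
  exact Nat.sInf_le ⟨hd.1.1, hagree.2.symm.trans hd.1.2⟩

theorem returnWordAt_eq_returnWordAt_iff (hw : Recurrent w)
    (hf : rightSpecialFactors w f.length ⊆ {f})
    (hi : i ∈ occurrences w f) (hj : j ∈ occurrences w f) :
    returnWordAt w f i = returnWordAt w f j ↔ w (i + f.length) = w (j + f.length) := by
  have hdi := hw.isLeast_returnTime hi
  have hdj := hw.isLeast_returnTime hj
  constructor
  · intro h
    have htime : returnTime w f i = returnTime w f j := by
      simpa [returnWordAt] using congrArg List.length h
    rw [returnWordAt, returnWordAt, ← htime] at h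
    rw [← htime] at hdj
    have hlong := factorAt_add_eq_factorAt_add_iff.2 ⟨h, hdi.1.2.trans hdj.1.2.symm⟩
    exact factorAt_eq_factorAt_iff.1 hlong f.length (by have := hdi.1.1; omega)
  · intro h
    have htime := le_antisymm (returnTime_le_of_next_eq hw hf hj hi h.symm)
      (returnTime_le_of_next_eq hw hf hi hj h)
    have hagree := factorAt_add_eq_of_isLeast_returnTimes hf hi hj h hdi
    rw [add_comm, factorAt_add_eq_factorAt_add_iff] at hagree
    rw [returnWordAt, returnWordAt, ← htime, hagree.1]

theorem ncard_returnWords_eq_ncard_nextLetters (hw : Recurrent w)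
    (hf : rightSpecialFactors w f.length ⊆ {f}) :
    (returnWords w f).ncard = (nextLetters w f).ncard :=
  ncard_image_eq_ncard_image_of_eq_iff_eq fun _ hi _ hj =>
    returnWordAt_eq_returnWordAt_iff hw hf hi hj

theorem Recurrent.mem_returnWords_iff (hw : Recurrent w) :
    v ∈ returnWords w u ↔ ∃ i ∈ occurrences w u,
      i ∈ occurrences w v ∧ IsLeast (returnTimes w u i) v.length := by
  constructor
  · rintro ⟨i, hi, rfl⟩
    refine ⟨i, hi, mem_occurrences_factorAt.2 rfl, ?_⟩
    simpa [returnWordAt] using hw.isLeast_returnTime hi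
  · rintro ⟨i, hi, hv, hd⟩
    exact ⟨i, hi, by rw [returnWordAt, returnTime, hd.csInf_eq, mem_occurrences.1 hv]⟩

theorem ncard_eq_two_iff_isLeast_returnTimes (hd : 0 < d) (hi : i ∈ occurrences w u)
    (hid : i + d ∈ occurrences w u) :
    {k | k ≤ d ∧ i + k ∈ occurrences w u}.ncard = 2 ↔ IsLeast (returnTimes w u i) d := by
  have hsub : {0, d} ⊆ {k | k ≤ d ∧ i + k ∈ occurrences w u} := by
    rintro k (rfl | rfl)
    · exact ⟨hd.le, hi⟩
    · exact ⟨le_rfl, hid⟩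
  have hfin : {k | k ≤ d ∧ i + k ∈ occurrences w u}.Finite :=
    (Set.finite_Iic d).subset fun _ hk => hk.1
  have hpair : ({0, d} : Set ℕ).ncard = 2 := Set.ncard_pair hd.ne
  constructor
  · intro hcard
    have heq := Set.eq_of_subset_of_ncard_le hsub (hcard.trans hpair.symm).le hfin
    refine ⟨⟨hd, hid⟩, fun k hk => ?_⟩
    by_contra! hkd
    have hmem : k ∈ ({0, d} : Set ℕ) := heq ▸ ⟨hkd.le, hk.2⟩
    rcases hmem with rfl | rfl
    · exact hk.1.false
    · exact hkd.false
  · intro hleast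
    rw [← hpair]
    congr 1
    refine (Set.Subset.antisymm hsub fun k hk => ?_).symm
    rcases Nat.eq_zero_or_pos k with rfl | hpos
    · exact Or.inl rfl
    · exact Or.inr (hk.1.antisymm (hleast.2 ⟨hpos, hk.2⟩))

end ReturnWords

section Binary

variable {ω : ℕ → Bool} {f u v : List Bool} {i n : ℕ}

theorem occursAt_iff_mem_occurrences : OccursAt u ω i ↔ i ∈ occurrences ω u := by
  simp [OccursAt, mem_occurrences, List.ext_getElem_iff, factorAt, eq_comm]

theorem setOf_isFactor_eq_range_factorAt :
    {u : List Bool | u.length = n ∧ IsFactor u ω} = Set.range (factorAt ω n) := by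
  ext u
  simp only [IsFactor, occursAt_iff_mem_occurrences]
  constructor
  · rintro ⟨rfl, i, hi⟩
    exact ⟨i, hi⟩
  · rintro ⟨i, rfl⟩
    exact ⟨length_factorAt, i, mem_occurrences_factorAt.2 rfl⟩

theorem IsSturmian.complexity_eq (hω : IsSturmian ω) (n : ℕ) : complexity ω n = n + 1 := by
  rw [complexity, ← setOf_isFactor_eq_range_factorAt]
  exact hω n

theorem IsSturmian.not_eventuallyPeriodic (hω : IsSturmian ω) : ¬ EventuallyPeriodic ω := by
  simp [eventuallyPeriodic_iff_exists_complexity_le, hω.complexity_eq]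

theorem IsSturmian.recurrent (hω : IsSturmian ω) : Recurrent ω :=
  recurrent_of_complexity_le hω.not_eventuallyPeriodic fun n => (hω.complexity_eq n).le

theorem IsSturmian.rightSpecialFactors_subset_singleton (hω : IsSturmian ω)
    (hf : IsRightSpecial ω f) : rightSpecialFactors ω f.length ⊆ {f} := fun _ hg =>
  rightSpecialFactors_subsingleton hω.not_eventuallyPeriodic (hω.complexity_eq _).le hg ⟨rfl, hf⟩

theorem IsRightSpecial.ncard_nextLetters (hf : IsRightSpecial ω f) :
    (nextLetters ω f).ncard = 2 := by
  have hlt := Set.one_lt_ncard_iff_nontrivial.2 hf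
  have hle := (nextLetters ω f).ncard_le_card
  rw [Nat.card_eq_fintype_card, Fintype.card_bool] at hle
  omega

theorem isReturnWord_iff : IsReturnWord ω u v ↔ ∃ i ∈ occurrences ω u,
    i ∈ occurrences ω v ∧ IsLeast (returnTimes ω u i) v.length := by
  have hprefix {i k : ℕ} (hi : i ∈ occurrences ω (v ++ u)) (hk : k ≤ v.length) :
      u <+: (v ++ u).drop k ↔ i + k ∈ occurrences ω u :=
    isPrefix_drop_iff_mem_occurrences hi (by simpa using hk)
  have hset {i : ℕ} (hi : i ∈ occurrences ω (v ++ u)) :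
      {k | k + u.length ≤ (v ++ u).length ∧ u <+: (v ++ u).drop k} =
        {k | k ≤ v.length ∧ i + k ∈ occurrences ω u} := by
    ext k
    simp only [List.length_append, add_le_add_iff_right, Set.mem_ofPred_eq]
    exact and_congr_right (hprefix hi)
  constructor
  · rintro ⟨hv, ⟨i, hi⟩, hpre, -, hcard⟩
    rw [occursAt_iff_mem_occurrences] at hi
    obtain ⟨hiv, hend⟩ := mem_occurrences_append.1 hi
    have hiu : i ∈ occurrences ω u := (hprefix hi (Nat.zero_le _)).1 hpre
    rw [hset hi] at hcard
    exact ⟨i, hiu, hiv,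
      (ncard_eq_two_iff_isLeast_returnTimes (List.length_pos_iff.2 hv) hiu hend).1 hcard⟩
  · rintro ⟨i, hiu, hiv, hd⟩
    have hi := mem_occurrences_append.2 ⟨hiv, hd.1.2⟩
    refine ⟨List.length_pos_iff.1 hd.1.1, ⟨i, occursAt_iff_mem_occurrences.2 hi⟩,
      (hprefix hi (Nat.zero_le _)).2 hiu, List.suffix_append v u, ?_⟩
    rw [hset hi]
    exact (ncard_eq_two_iff_isLeast_returnTimes hd.1.1 hiu hd.1.2).2 hd

theorem Recurrent.setOf_isReturnWord (hω : Recurrent ω) (u : List Bool) :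
    {v | IsReturnWord ω u v} = returnWords ω u :=
  Set.ext fun _ => isReturnWord_iff.trans hω.mem_returnWords_iff.symm

end Binary

/-- Every factor of a Sturmian infinite word has exactly two return words. -/
theorem two_return_words (ω : ℕ → Bool) (hω : IsSturmian ω) (u : List Bool)
    (hu : IsFactor u ω) :
    {v : List Bool | IsReturnWord ω u v}.ncard = 2 := by
  obtain ⟨i, hi⟩ := hu
  obtain ⟨f, hf, hfu⟩ := exists_isRightSpecial_occurrences_eq hω.not_eventuallyPeriodic
    hω.recurrent (occursAt_iff_mem_occurrences.1 hi)
  calc {v | IsReturnWord ω u v}.ncard = (returnWords ω u).ncard := by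
        rw [hω.recurrent.setOf_isReturnWord]
    _ = (returnWords ω f).ncard := by rw [returnWords_congr hfu]
    _ = (nextLetters ω f).ncard :=
        ncard_returnWords_eq_ncard_nextLetters hω.recurrent
          (hω.rightSpecialFactors_subset_singleton hf)
    _ = 2 := hf.ncard_nextLetters
end

section
/- Let w be a finite Sturmian word. Then there exist a finite Sturmian word w' of some length n' having w as a prefix and a line ℓ' ∈ L_{n'} such that w' ∈ m(ℓ') and w' goes through every integer point (i,j) of ℓ' satisfying 0 ≤ i ≤ n'. -/
/-!
Floors are right-continuous, so the slope of a line defining `w` may be raised slightly to a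
rational `c = a / q` without changing `w`. Lower this line until one of the points
`k * c + ρ`, `k ≤ |w|`, becomes an integer: the floors, hence the word, still do not change. The
line now carries an integer point `(k, j)`, and by rationality all its translates by multiples of
`(q, a)`. Let `w'` be the word defined by this line up to a translate far to the right: it extends
`w`, both halves of its grid contain an integer point, and it goes through all integer points
because it is defined by the line itself. Raising the line slightly shows `w' ∈ m(ℓ')`.
-/

open Filter Topology

theorem not_min_lt_and_lt_max_of_floor_eq {x y : ℝ} (h : ⌊x⌋ = ⌊y⌋) (j : ℤ) :
    ¬(min x y < j ∧ j < max x y) := by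
  rintro ⟨hmin, hmax⟩
  have hlt : ⌊min x y⌋ < j := Int.floor_lt.2 hmin
  have hle : j ≤ ⌊max x y⌋ := Int.le_floor.2 hmax.le
  rw [Int.floor_mono.map_min, h, min_self] at hlt
  rw [Int.floor_mono.map_max, h, max_self] at hle
  exact hlt.not_ge hle

theorem eventually_forall_floor_eq (α ρ : ℝ) (n : ℕ) :
    ∀ᶠ l : ℝ × ℝ in 𝓝[≥] (α, ρ), ∀ k ≤ n, ⌊(k : ℝ) * l.1 + l.2⌋ = ⌊(k : ℝ) * α + ρ⌋ := by
  refine (eventually_all_finite (Set.finite_Iic n)).2 fun k _ => ?_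
  have hcont : ContinuousWithinAt (fun l : ℝ × ℝ => (k : ℝ) * l.1 + l.2)
      (Set.Ici (α, ρ)) (α, ρ) := by fun_prop
  have hmaps : Set.MapsTo (fun l : ℝ × ℝ => (k : ℝ) * l.1 + l.2) (Set.Ici (α, ρ))
      (Set.Ici ((k : ℝ) * α + ρ)) := fun l hl =>
    add_le_add (mul_le_mul_of_nonneg_left hl.1 k.cast_nonneg) hl.2
  exact tendsto_pure.1
    ((tendsto_floor_right_pure_floor _).comp (hcont.tendsto_nhdsWithin hmaps))

/-- The lower mechanical word of length `n` with slope `α` and intercept `ρ`. It is defined by the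
line `(α, ρ)` when `α ∈ [0, 1]`; for other slopes the floors may jump by an amount that is not a
letter, and all positive jumps are encoded as `true`. -/
noncomputable def mechanicalWord (α ρ : ℝ) (n : ℕ) : List Bool :=
  (List.range n).map fun k : ℕ => decide (⌊(k : ℝ) * α + ρ⌋ < ⌊((k : ℝ) + 1) * α + ρ⌋)

@[simp]
theorem length_mechanicalWord (α ρ : ℝ) (n : ℕ) : (mechanicalWord α ρ n).length = n := by
  simp [mechanicalWord]

theorem mechanicalWord_prefix (α ρ : ℝ) {m n : ℕ} (h : m ≤ n) :
    mechanicalWord α ρ m <+: mechanicalWord α ρ n := by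
  have hrange : List.range m <+: List.range n := by
    rw [List.prefix_iff_eq_take, List.length_range, List.take_range, min_eq_left h]
  exact hrange.map _

theorem definesWord_mechanicalWord {α : ℝ} (hα : α ∈ Set.Icc (0 : ℝ) 1) (ρ : ℝ) (n : ℕ) :
    DefinesWord α ρ (mechanicalWord α ρ n) := by
  intro k hk
  have hlower : ⌊(k : ℝ) * α + ρ⌋ ≤ ⌊((k : ℝ) + 1) * α + ρ⌋ :=
    Int.floor_le_floor (by linarith [hα.1])
  have hupper : ⌊((k : ℝ) + 1) * α + ρ⌋ ≤ ⌊(k : ℝ) * α + ρ⌋ + 1 := by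
    rw [← Int.floor_add_one]
    exact Int.floor_le_floor (by linarith [hα.2])
  simp only [mechanicalWord, List.get_eq_getElem, List.getElem_map, List.getElem_range,
    decide_eq_true_eq]
  split_ifs <;> omega

namespace DefinesWord

variable {α ρ : ℝ} {w : List Bool}

theorem eq_mechanicalWord (h : DefinesWord α ρ w) : w = mechanicalWord α ρ w.length := by
  refine List.ext_getElem (length_mechanicalWord α ρ _).symm fun k hk _ => ?_
  have hletter := h k hk
  simp only [List.get_eq_getElem] at hletter
  simp only [mechanicalWord, List.getElem_map, List.getElem_range]
  cases hwk : w[k] <;> simp only [hwk, Bool.false_eq_true, if_true, if_false] at hletter <;>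
    symm <;> simp only [decide_eq_true_eq, decide_eq_false_iff_not] <;> omega

theorem congr_floor {α' ρ' : ℝ} (h : DefinesWord α ρ w)
    (hfloor : ∀ k ≤ w.length, ⌊(k : ℝ) * α' + ρ'⌋ = ⌊(k : ℝ) * α + ρ⌋) :
    DefinesWord α' ρ' w := by
  intro k hk
  have hsucc := hfloor (k + 1) hk
  push_cast at hsucc
  rw [h k hk, hsucc, hfloor k hk.le]

theorem count_take (h : DefinesWord α ρ w) {i : ℕ} (hi : i ≤ w.length) :
    ((w.take i).count true : ℤ) = ⌊(i : ℝ) * α + ρ⌋ - ⌊ρ⌋ := by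
  induction i with
  | zero => simp
  | succ k ih =>
    have hletter := h k hi
    have hcount : (((w.take (k + 1)).count true : ℕ) : ℤ) =
        (w.take k).count true + if w[k] then 1 else 0 := by
      rw [List.take_succ_eq_append_getElem hi, List.count_append]
      cases w[k] <;> simp
    rw [List.get_eq_getElem] at hletter
    rw [hcount, ih (by omega), hletter]
    push_cast
    ring

theorem goesThrough (h : DefinesWord α ρ w) (hρ : ρ ∈ Set.Ico (0 : ℝ) 1) {p : ℤ × ℤ}
    (h₀ : 0 ≤ p.1) (hlen : p.1 ≤ w.length) (hp : IsIntegerPoint (α, ρ) p) : GoesThrough w p := by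
  obtain ⟨i, j⟩ := p
  lift i to ℕ using h₀
  have hj : (j : ℝ) = (i : ℝ) * α + ρ := by simpa [IsIntegerPoint, mul_comm] using hp
  have hcount := h.count_take (Int.ofNat_le.1 hlen)
  rwa [← hj, Int.floor_intCast, Int.floor_eq_zero_iff.2 hρ, sub_zero] at hcount

theorem exists_rat_slope (h : DefinesWord α ρ w) {b : ℝ} (hb : α < b) :
    ∃ c : ℚ, (c : ℝ) ∈ Set.Ioo α b ∧ DefinesWord c ρ w := by
  have hslope : Tendsto (fun a : ℝ => (a, ρ)) (𝓝[>] α) (𝓝[≥] (α, ρ)) :=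
    (by fun_prop : Continuous fun a : ℝ => (a, ρ)).continuousWithinAt.tendsto_nhdsWithin
      fun _ ha => ⟨le_of_lt ha, le_rfl⟩
  obtain ⟨u, hu, hsub⟩ := mem_nhdsGT_iff_exists_Ioo_subset.1
    (hslope.eventually (eventually_forall_floor_eq α ρ w.length))
  obtain ⟨c, hαc, hc⟩ := exists_rat_btwn (lt_min hu hb)
  exact ⟨c, ⟨hαc, hc.trans_le (min_le_right _ _)⟩,
    h.congr_floor (hsub ⟨hαc, hc.trans_le (min_le_left _ _)⟩)⟩

theorem exists_intercept_isIntegerPoint (h : DefinesWord α ρ w) :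
    ∃ ρ' ∈ Set.Icc (⌊ρ⌋ : ℝ) ρ, DefinesWord α ρ' w ∧
      ∃ k ≤ w.length, ∃ j : ℤ, IsIntegerPoint (α, ρ') (k, j) := by
  obtain ⟨k, hk, hmin⟩ := (Finset.range (w.length + 1)).exists_min_image
    (fun i => Int.fract ((i : ℝ) * α + ρ)) ⟨0, by simp⟩
  simp only [Finset.mem_range, Nat.lt_succ_iff] at hk hmin
  set d := Int.fract ((k : ℝ) * α + ρ)
  have hd₀ : 0 ≤ d := Int.fract_nonneg _
  have hdρ : d ≤ Int.fract ρ := by simpa using hmin 0 (Nat.zero_le _)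
  refine ⟨ρ - d, ⟨?_, ?_⟩, h.congr_floor fun i hi => ?_, k, hk, ⌊(k : ℝ) * α + ρ⌋, ?_⟩
  · linarith [Int.floor_add_fract ρ]
  · linarith
  · have hdi := hmin i hi
    rw [Int.floor_eq_iff]
    constructor <;>
      linarith [Int.floor_add_fract ((i : ℝ) * α + ρ), Int.fract_lt_one ((i : ℝ) * α + ρ)]
  · simp only [IsIntegerPoint, Int.cast_natCast]
    linarith [Int.floor_add_fract ((k : ℝ) * α + ρ)]

theorem mem_mImage (h : DefinesWord α ρ w) (hα : α ∈ Set.Ioo (0 : ℝ) 1)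
    (hρ : ρ ∈ Set.Ico (0 : ℝ) 1) {p₁ p₂ : ℤ × ℤ} (hp₁ : IsIntegerPoint (α, ρ) p₁)
    (hp₂ : IsIntegerPoint (α, ρ) p₂) (h₀ : 0 ≤ p₁.1) (h₁ : (p₁.1 : ℝ) ≤ w.length / 2)
    (h₂ : (w.length / 2 : ℝ) < p₂.1) (h₃ : (p₂.1 : ℝ) ≤ w.length) :
    w ∈ mImage w.length (α, ρ) := by
  have hintercept : Tendsto (fun b : ℝ => (α, b)) (𝓝[>] ρ) (𝓝[≥] (α, ρ)) :=
    (by fun_prop : Continuous fun b : ℝ => (α, b)).continuousWithinAt.tendsto_nhdsWithin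
      fun _ hb => ⟨le_rfl, le_of_lt hb⟩
  obtain ⟨ρ', hfloor, hρρ', hρ'⟩ :=
    ((hintercept.eventually (eventually_forall_floor_eq α ρ w.length)).and
      (Ioo_mem_nhdsGT hρ.2)).exists
  have hρ'mem : ρ' ∈ Set.Ioo (0 : ℝ) 1 := ⟨hρ.1.trans_lt hρρ', hρ'⟩
  have h' : DefinesWord α ρ' w := h.congr_floor hfloor
  have habove {p : ℤ × ℤ} (hp : IsIntegerPoint (α, ρ) p) : (p.2 : ℝ) < α * p.1 + ρ' :=
    hp.trans_lt (add_lt_add_right hρρ' _)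
  refine ⟨⟨rfl, α, ρ', hα, hρ'mem, h'⟩, (α, ρ'), ⟨hα, hρ'mem⟩, h', ?_,
    p₁, p₂, hp₁, hp₂, h₀, h₁, h₂, h₃, habove hp₁, habove hp₂⟩
  rintro ⟨⟨i, j⟩, hi₀, hi, hbetween⟩
  lift i to ℕ using hi₀
  refine not_min_lt_and_lt_max_of_floor_eq ?_ j hbetween
  simpa [mul_comm α] using (hfloor i (Nat.cast_le.1 hi)).symm

end DefinesWord

theorem finite_setOf_isIntegerPoint (l : ℝ × ℝ) (k : ℝ) :
    {p : ℤ × ℤ | 0 ≤ p.1 ∧ (p.1 : ℝ) ≤ k ∧ IsIntegerPoint l p}.Finite := by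
  refine ((Set.finite_Icc 0 ⌊k⌋).image fun i : ℤ => (i, ⌊l.1 * i + l.2⌋)).subset ?_
  rintro ⟨i, j⟩ ⟨h₀, hk, hp⟩
  refine ⟨i, ⟨h₀, Int.le_floor.2 hk⟩, Prod.ext rfl ?_⟩
  exact (congrArg Int.floor hp.symm).trans (Int.floor_intCast j)

theorem two_le_Zpts {l : ℝ × ℝ} {k : ℝ} {p₁ p₂ : ℤ × ℤ} (hp₁ : IsIntegerPoint l p₁)
    (hp₂ : IsIntegerPoint l p₂) (h₀ : 0 ≤ p₁.1) (hlt : p₁.1 < p₂.1) (hk : (p₂.1 : ℝ) ≤ k) :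
    2 ≤ Zpts k l :=
  (Set.one_lt_ncard (finite_setOf_isIntegerPoint l k)).2
    ⟨p₁, ⟨h₀, (Int.cast_le.2 hlt.le).trans hk, hp₁⟩, p₂, ⟨h₀.trans hlt.le, hk, hp₂⟩,
      fun heq => hlt.ne (congrArg Prod.fst heq)⟩

theorem IsIntegerPoint.add_mul_den {c : ℚ} {ρ : ℝ} {p : ℤ × ℤ} (hp : IsIntegerPoint (c, ρ) p)
    (t : ℤ) : IsIntegerPoint (c, ρ) (p.1 + t * c.den, p.2 + t * c.num) := by
  have hnum : (c : ℝ) * c.den = c.num := by exact_mod_cast c.mul_den_eq_num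
  have hline : (p.2 : ℝ) = c * p.1 + ρ := hp
  simp only [IsIntegerPoint]
  push_cast
  rw [hline, ← hnum]
  ring

theorem IsIntegerPoint.exists_ge {c : ℚ} {ρ : ℝ} {p : ℤ × ℤ} (hp : IsIntegerPoint (c, ρ) p)
    (n : ℕ) : ∃ N ≥ n, ∃ j : ℤ, IsIntegerPoint (c, ρ) ((N : ℕ), j) := by
  have hden : (n + |p.1|) * 1 ≤ (n + |p.1|) * (c.den : ℤ) :=
    mul_le_mul_of_nonneg_left (by exact_mod_cast c.pos) (by positivity)
  have hn : (n : ℤ) ≤ p.1 + (n + |p.1|) * c.den := by linarith [neg_abs_le p.1]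
  obtain ⟨N, hN⟩ := Int.eq_ofNat_of_zero_le ((Int.natCast_nonneg n).trans hn)
  have hpN := hp.add_mul_den (n + |p.1|)
  rw [hN] at hn hpN
  exact ⟨N, Int.ofNat_le.1 hn, _, hpN⟩

theorem IsFiniteSturmian.exists_rat_slope_isIntegerPoint {w : List Bool}
    (hw : IsFiniteSturmian w) :
    ∃ (c : ℚ) (ρ : ℝ), (c : ℝ) ∈ Set.Ioo (0 : ℝ) 1 ∧ ρ ∈ Set.Ico (0 : ℝ) 1 ∧ DefinesWord c ρ w ∧
      ∃ k ≤ w.length, ∃ j : ℤ, IsIntegerPoint (c, ρ) (k, j) := by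
  obtain ⟨α, ρ₀, hα, hρ₀, h⟩ := hw
  obtain ⟨c, ⟨hαc, hc⟩, h⟩ := h.exists_rat_slope hα.2
  obtain ⟨ρ, ⟨hfloor, hle⟩, h, hpoint⟩ := h.exists_intercept_isIntegerPoint
  have hρ : 0 ≤ ρ := (Int.cast_nonneg (Int.floor_nonneg.2 hρ₀.1.le)).trans hfloor
  exact ⟨c, ρ, ⟨hα.1.trans hαc, hc⟩, ⟨hρ, hle.trans_lt hρ₀.2⟩, h, hpoint⟩

/-- Every finite Sturmian word `w` has a finite Sturmian extension `w'` that goes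
through all integer points (inside the grid) of the line `ℓ' ∈ L_{|w'|}` with
`w' ∈ m(ℓ')`. -/
theorem extend_through_all_points (w : List Bool) (hw : IsFiniteSturmian w) :
    ∃ w' : List Bool, w <+: w' ∧ IsFiniteSturmian w' ∧
      ∃ l' ∈ Lset w'.length, w' ∈ mImage w'.length l' ∧
        ∀ p : ℤ × ℤ, 0 ≤ p.1 → (p.1 : ℝ) ≤ w'.length → IsIntegerPoint l' p →
          GoesThrough w' p := by
  obtain ⟨c, ρ, hc, hρ, hw, k, hk, j, hp₁⟩ := hw.exists_rat_slope_isIntegerPoint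
  obtain ⟨N, hN, j', hp₂⟩ := hp₁.exists_ge (2 * w.length + 1)
  have hkN : (2 * k + 1 : ℝ) ≤ N := by exact_mod_cast (by omega : 2 * k + 1 ≤ N)
  set w' := mechanicalWord c ρ N
  have hlen : w'.length = N := length_mechanicalWord c ρ N
  have hpre : w <+: w' := by
    rw [hw.eq_mechanicalWord]
    exact mechanicalWord_prefix c ρ (by omega)
  have hw' : DefinesWord c ρ w' := definesWord_mechanicalWord (Set.Ioo_subset_Icc_self hc) ρ N
  have hline : ((c : ℝ), ρ) ∈ Lset w'.length := ⟨Set.Ioo_subset_Icc_self hc,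
    Set.Ico_subset_Icc_self hρ,
    two_le_Zpts hp₁ hp₂ (Int.natCast_nonneg k) (Int.ofNat_lt.2 (by omega)) (by simp [hlen])⟩
  have hmem : w' ∈ mImage w'.length (c, ρ) := hw'.mem_mImage hc hρ hp₁ hp₂
    (Int.natCast_nonneg k) (by push_cast [hlen]; linarith) (by push_cast [hlen]; linarith)
    (by simp [hlen])
  exact ⟨w', hpre, hmem.1.2, (c, ρ), hline, hmem,
    fun p h₀ hp => hw'.goesThrough hρ h₀ (by exact_mod_cast hp)⟩
end

section
/- For every integer n ≥ 1, the number of palindromic finite Sturmian words of length n different from the word 1^n (the word consisting of n letters 1) equals the number of integer triples (a,b,c) such that gcd(a,b) = 1, 0 ≤ b < a ≤ n, 0 ≤ c < a, 2c ≡ −bn − 1 (mod a), and the line y = (b/a)x + c/a contains at least two integer points (i,j) ∈ ℤ×ℤ with 0 ≤ i ≤ n. -/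
/-- The set of integer triples `(a,b,c)` with `gcd(a,b) = 1`, `0 ≤ b < a ≤ n`,
`0 ≤ c < a`, `2c ≡ -bn-1 (mod a)`, such that the line `y = (b/a)x + c/a` contains
at least two integer points `(i,j)` with `0 ≤ i ≤ n`. -/
def palTriples (n : ℕ) : Set (ℤ × ℤ × ℤ) :=
  {t | Int.gcd t.1 t.2.1 = 1 ∧ 0 ≤ t.2.1 ∧ t.2.1 < t.1 ∧ t.1 ≤ (n : ℤ) ∧
       0 ≤ t.2.2 ∧ t.2.2 < t.1 ∧ (t.1 ∣ 2 * t.2.2 + t.2.1 * n + 1) ∧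
       ∃ p q : ℤ × ℤ, p ≠ q ∧ 0 ≤ p.1 ∧ p.1 ≤ (n : ℤ) ∧ 0 ≤ q.1 ∧ q.1 ≤ (n : ℤ) ∧
         p.2 * t.1 = t.2.1 * p.1 + t.2.2 ∧ q.2 * t.1 = t.2.1 * q.1 + t.2.2}

/-!
Let `w` be a palindrome of length `n` and let `S k` be the number of ones among its first `k`
letters. Then `w` is Sturmian exactly when some line through the centre `(n/2, (S n + 1)/2)` lies
strictly above all grid points `(k, S k)`, `0 ≤ k ≤ n`. Among the rational slopes of such lines
there is exactly one, `b/a`, of smallest denominator, and shifting its line down by `1/(2a)` gives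
the line `y = (b/a)x + c/a` of the triple: `2c = a(S n + 1) - bn - 1`.

The two integer points come from the Farey parents `u/v` and `(b - u)/(a - v)` of `b/a`. As they
have smaller denominators, their central lines fail to pass above some grid point each; sliding
these two grid points along the parent directions brings them onto the line of the triple, one on
each side of the midpoint. Conversely, integer points on both sides of the midpoint force every
other admissible slope to have a larger denominator.
-/

section WordHeight

/-- The number of ones among the first `k` letters of `w`. -/
def wordHeight (w : List Bool) (k : ℕ) : ℤ := (w.take k).count true

lemma wordHeight_zero (w : List Bool) : wordHeight w 0 = 0 := by simp [wordHeight]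

lemma wordHeight_nonneg (w : List Bool) (k : ℕ) : 0 ≤ wordHeight w k := Int.natCast_nonneg _

lemma wordHeight_succ {w : List Bool} {k : ℕ} (hk : k < w.length) :
    wordHeight w (k + 1) = wordHeight w k + if w[k] then 1 else 0 := by
  rw [wordHeight, wordHeight, List.take_succ_eq_append_getElem hk, List.count_append]
  cases w[k] <;> simp

lemma eq_of_wordHeight_eq {w w' : List Bool} (hlen : w.length = w'.length)
    (h : ∀ k ≤ w.length, wordHeight w k = wordHeight w' k) : w = w' := by
  refine List.ext_getElem hlen fun k hk hk' => ?_
  have hsucc := h (k + 1) hk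
  rw [wordHeight_succ hk, wordHeight_succ hk', h k hk.le, add_right_inj] at hsucc
  cases hx : w[k] <;> cases hy : w'[k] <;> simp_all

lemma wordHeight_length_lt {w : List Bool} (hw : w ≠ List.replicate w.length true) :
    wordHeight w w.length < w.length := by
  have hcount : w.count true ≠ w.length := fun h =>
    hw (List.eq_replicate_length.2 fun x hx => (List.count_eq_length.1 h x hx).symm)
  simpa [wordHeight] using lt_of_le_of_ne List.count_le_length hcount

lemma wordHeight_replicate_true (n : ℕ) : wordHeight (List.replicate n true) n = n := by
  simp [wordHeight]

lemma wordHeight_reverse (w : List Bool) (k : ℕ) :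
    wordHeight w.reverse k = wordHeight w w.length - wordHeight w (w.length - k) := by
  have hsplit := congrArg (List.count true) (List.take_append_drop (w.length - k) w)
  rw [List.count_append] at hsplit
  simp only [wordHeight, List.take_reverse, List.count_reverse, List.take_length]
  omega

/-- Invariance of the graph of `S` on `[0, n]` under the reflection in `(n / 2, S n / 2)`. -/
def IsCentrallySymmetric (n : ℕ) (S : ℕ → ℤ) : Prop := ∀ k ≤ n, S k + S (n - k) = S n

lemma IsCentrallySymmetric.apply_zero {n : ℕ} {S : ℕ → ℤ} (h : IsCentrallySymmetric n S) :
    S 0 = 0 := by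
  simpa using h 0 n.zero_le

lemma reverse_eq_self_iff_isCentrallySymmetric {w : List Bool} :
    w.reverse = w ↔ IsCentrallySymmetric w.length (wordHeight w) := by
  constructor
  · intro h k _
    rw [← eq_sub_iff_add_eq, ← wordHeight_reverse, h]
  · intro h
    refine eq_of_wordHeight_eq w.length_reverse fun k hk => ?_
    rw [wordHeight_reverse, ← h k (by simpa using hk), add_sub_cancel_right]

lemma definesWord_iff_wordHeight_eq_floor {α ρ : ℝ} (hρ : ⌊ρ⌋ = 0) {w : List Bool} :
    DefinesWord α ρ w ↔ ∀ k ≤ w.length, wordHeight w k = ⌊(k : ℝ) * α + ρ⌋ := by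
  constructor
  · intro h k
    induction k with
    | zero => simp [wordHeight_zero, hρ]
    | succ k ih =>
      intro hk
      have hletter := h k hk
      rw [List.get_eq_getElem] at hletter
      rw [wordHeight_succ hk, ih (by omega), hletter]
      push_cast
      ring
  · intro h k hk
    have hsucc := h (k + 1) hk
    rw [wordHeight_succ hk, h k hk.le] at hsucc
    push_cast at hsucc
    rw [List.get_eq_getElem, ← hsucc, add_sub_cancel_left]

lemma isFiniteSturmian_iff_wordHeight_eq_floor {w : List Bool} :
    IsFiniteSturmian w ↔ ∃ α ρ : ℝ, α ∈ Set.Ioo (0 : ℝ) 1 ∧ ρ ∈ Set.Ioo (0 : ℝ) 1 ∧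
      ∀ k ≤ w.length, wordHeight w k = ⌊(k : ℝ) * α + ρ⌋ :=
  exists₂_congr fun _ _ => and_congr_right fun _ => and_congr_right fun hρ =>
    definesWord_iff_wordHeight_eq_floor (Int.floor_eq_zero_iff.2 (Set.Ioo_subset_Ico_self hρ))

/-- The word of length `n` whose letters are the increments of `f`, for `f` with increments in
`{0, 1}`. -/
def wordOfHeights (n : ℕ) (f : ℕ → ℤ) : List Bool :=
  List.ofFn fun k : Fin n => decide (f (k + 1) = f k + 1)

lemma length_wordOfHeights (n : ℕ) (f : ℕ → ℤ) : (wordOfHeights n f).length = n :=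
  List.length_ofFn

lemma wordHeight_wordOfHeights {n : ℕ} {f : ℕ → ℤ} (hf0 : f 0 = 0)
    (hstep : ∀ k < n, f (k + 1) = f k ∨ f (k + 1) = f k + 1) {k : ℕ} (hk : k ≤ n) :
    wordHeight (wordOfHeights n f) k = f k := by
  induction k with
  | zero => rw [wordHeight_zero, hf0]
  | succ k ih =>
    rw [wordHeight_succ (by rwa [length_wordOfHeights]), ih (by omega)]
    rcases hstep k hk with h | h <;> simp [wordOfHeights, h]

end WordHeight

section LineHeight

/-- The height of the digital line `y = (b/a)x + c/a` at the abscissa `k`. -/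
def lineHeight (a b c : ℤ) (k : ℕ) : ℤ := (b * k + c) / a

variable {a b c : ℤ}

lemma lineHeight_eq_iff (ha : 0 < a) {k : ℕ} {y : ℤ} :
    lineHeight a b c k = y ↔ a * y ≤ b * k + c ∧ b * k + c < a * y + a := by
  rw [lineHeight, Int.ediv_eq_iff_of_pos ha, mul_comm y]

lemma lineHeight_zero (hc : 0 ≤ c) (hca : c < a) : lineHeight a b c 0 = 0 := by
  simp [lineHeight, Int.ediv_eq_zero_of_lt hc hca]

lemma lineHeight_succ_eq_or (hb : 0 ≤ b) (hba : b < a) (k : ℕ) :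
    lineHeight a b c (k + 1) = lineHeight a b c k ∨
      lineHeight a b c (k + 1) = lineHeight a b c k + 1 := by
  have ha : 0 < a := hb.trans_lt hba
  have hlower : lineHeight a b c k ≤ lineHeight a b c (k + 1) :=
    Int.ediv_le_ediv ha (by push_cast; linarith)
  have hupper : lineHeight a b c (k + 1) ≤ lineHeight a b c k + 1 := by
    rw [lineHeight, lineHeight, ← Int.add_ediv_of_dvd_right dvd_rfl |>.trans
      (congrArg _ (Int.ediv_self ha.ne'))]
    exact Int.ediv_le_ediv ha (by push_cast; linarith)
  omega

lemma ediv_add_ediv_of_add_add_one_eq_mul (ha : 0 < a) {x y d : ℤ} (h : x + y + 1 = a * d) :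
    x / a + y / a + 1 = d := by
  have hy : y / a = d - 1 - x / a := by
    rw [Int.ediv_eq_iff_of_pos ha]
    constructor <;> linarith [Int.ediv_mul_le x ha.ne', Int.lt_ediv_add_one_mul_self x ha]
  omega

lemma isCentrallySymmetric_lineHeight {n : ℕ} (hc : 0 ≤ c) (hca : c < a)
    (hdvd : a ∣ 2 * c + b * n + 1) : IsCentrallySymmetric n (lineHeight a b c) := by
  obtain ⟨d, hd⟩ := hdvd
  have hsum : ∀ k ≤ n, lineHeight a b c k + lineHeight a b c (n - k) + 1 = d := fun k hk =>
    ediv_add_ediv_of_add_add_one_eq_mul (hc.trans_lt hca) (by push_cast [hk]; linarith)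
  intro k hk
  have hk_sum := hsum k hk
  have h0_sum := hsum 0 n.zero_le
  rw [lineHeight_zero hc hca, Nat.sub_zero] at h0_sum
  omega

lemma mul_lineHeight_add_one {n : ℕ} (hc : 0 ≤ c) (hca : c < a)
    (hdvd : a ∣ 2 * c + b * n + 1) :
    a * (lineHeight a b c n + 1) = 2 * c + b * n + 1 := by
  obtain ⟨d, hd⟩ := hdvd
  have hsum : c / a + lineHeight a b c n + 1 = d :=
    ediv_add_ediv_of_add_add_one_eq_mul (hc.trans_lt hca) (by linarith)
  rw [Int.ediv_eq_zero_of_lt hc hca, zero_add] at hsum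
  rw [hsum, hd]

lemma lineHeight_lt {n : ℕ} (hba : b < a) (hca : c < a) (han : a ≤ n) (ha : 0 < a) :
    lineHeight a b c n < n := by
  rw [lineHeight, Int.ediv_lt_iff_lt_mul ha]
  have hbn : b * n ≤ (a - 1) * n := by gcongr; omega
  linarith

lemma floor_intCast_add_div (ha : 0 ≤ a) (x : ℤ) {θ : ℝ} (hθ : θ ∈ Set.Ico (0 : ℝ) 1) :
    ⌊(x + θ) / (a : ℝ)⌋ = x / a := by
  rw [Int.floor_div_cast_of_nonneg ha, Int.floor_intCast_add, Int.floor_eq_zero_iff.2 hθ, add_zero]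

/-- Raising the slope by `1 / (2 (n + 1) a)` and the intercept by `1 / (2 a)` moves both into
`(0, 1)` without crossing a grid point. -/
lemma isFiniteSturmian_of_wordHeight_eq_lineHeight (hb : 0 ≤ b) (hba : b < a) (hc : 0 ≤ c)
    (hca : c < a) {w : List Bool}
    (hw : ∀ k ≤ w.length, wordHeight w k = lineHeight a b c k) : IsFiniteSturmian w := by
  set n := w.length
  have ha : (0 : ℝ) < a := by exact_mod_cast hb.trans_lt hba
  have perturbed_mem (x : ℤ) (hx : 0 ≤ x) (hxa : x < a) {θ : ℝ} (hθ0 : 0 < θ) (hθ1 : θ < 1) :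
      (x + θ) / a ∈ Set.Ioo (0 : ℝ) 1 := by
    have hx' : (0 : ℝ) ≤ x := by exact_mod_cast hx
    have hxa' : (x : ℝ) + 1 ≤ a := by exact_mod_cast hxa
    exact ⟨div_pos (add_pos_of_nonneg_of_pos hx' hθ0) ha, (div_lt_one ha).2 (by linarith)⟩
  have hε : (1 : ℝ) / (2 * (n + 1)) < 1 := by
    rw [div_lt_one (by positivity)]
    linarith [n.cast_nonneg (α := ℝ)]
  refine isFiniteSturmian_iff_wordHeight_eq_floor.2 ⟨(b + 1 / (2 * (n + 1))) / a, (c + 1 / 2) / a,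
    perturbed_mem b hb hba (by positivity) hε, perturbed_mem c hc hca (by norm_num) (by norm_num),
    fun k hk => ?_⟩
  have hθ : (k : ℝ) / (2 * (n + 1)) + 1 / 2 ∈ Set.Ico (0 : ℝ) 1 := by
    refine ⟨by positivity, ?_⟩
    have hkn : (k : ℝ) / (2 * (n + 1)) < 1 / 2 := by
      rw [div_lt_div_iff₀ (by positivity) two_pos]
      linarith [(Nat.cast_le (α := ℝ)).2 hk]
    linarith
  rw [hw k hk, lineHeight, ← floor_intCast_add_div (hb.trans hba.le) _ hθ]
  congr 1
  push_cast
  ring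

lemma dvd_sub_of_dvd_mul_add (hab : IsCoprime a b) {x y : ℤ} (hx : a ∣ b * x + c)
    (hy : a ∣ b * y + c) : a ∣ y - x := by
  refine hab.dvd_of_dvd_mul_left ?_
  rw [mul_sub, ← add_sub_add_right_eq_sub _ _ c]
  exact dvd_sub hy hx

lemma dvd_mul_add_of_dvd_sub {x y : ℤ} (hx : a ∣ b * x + c) (hxy : a ∣ x - y) :
    a ∣ b * y + c := by
  have hdvd := dvd_sub hx (hxy.mul_left b)
  rwa [mul_sub, add_sub_right_comm, sub_sub_cancel] at hdvd

lemma emod_le_self_of_nonneg (ha : 0 ≤ a) {x : ℤ} (hx : 0 ≤ x) : x % a ≤ x := by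
  rw [Int.emod_def]
  exact sub_le_self _ (mul_nonneg ha (Int.ediv_nonneg hx ha))

lemma exists_dvd_around_midpoint {n : ℕ} (ha : 0 < a) (hab : IsCoprime a b) {x y : ℤ}
    (hx0 : 0 ≤ x) (hxy : x < y) (hyn : y ≤ n) (hx : a ∣ b * x + c) (hy : a ∣ b * y + c) :
    ∃ k l : ℕ, 2 * k < n ∧ n < 2 * l ∧ l ≤ n ∧ a ∣ b * k + c ∧ a ∣ b * l + c := by
  have hsep : a ≤ y - x := Int.le_of_dvd (by omega) (dvd_sub_of_dvd_mul_add hab hx hy)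
  have hr := Int.emod_lt_of_pos x ha
  have hrx := emod_le_self_of_nonneg ha.le hx0
  have hs := Int.emod_lt_of_pos (n - y) ha
  have hsy := emod_le_self_of_nonneg ha.le (sub_nonneg.2 hyn)
  have hs0 := Int.emod_nonneg (n - y) ha.ne'
  obtain ⟨k, hk⟩ := Int.eq_ofNat_of_zero_le (Int.emod_nonneg x ha.ne')
  obtain ⟨l, hl⟩ := Int.eq_ofNat_of_zero_le (by omega : 0 ≤ n - (n - y) % a)
  refine ⟨k, l, by omega, by omega, by omega, ?_, ?_⟩
  · exact dvd_mul_add_of_dvd_sub hx (hk ▸ Int.dvd_self_sub_emod)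
  · refine dvd_mul_add_of_dvd_sub hy (hl ▸ ?_)
    rw [← dvd_neg, show -(y - (n - (n - y) % a)) = n - y - (n - y) % a by ring]
    exact Int.dvd_self_sub_emod

lemma mem_palTriples_iff {n : ℕ} :
    (a, b, c) ∈ palTriples n ↔ IsCoprime a b ∧ 0 ≤ b ∧ b < a ∧ 0 ≤ c ∧ c < a ∧
      a ∣ 2 * c + b * n + 1 ∧
      ∃ k l : ℕ, 2 * k < n ∧ n < 2 * l ∧ l ≤ n ∧ a ∣ b * k + c ∧ a ∣ b * l + c := by
  constructor
  · rintro ⟨hgcd, hb, hba, -, hc, hca, hdvd, p, q, hpq, hp0, hpn, hq0, hqn, hp, hq⟩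
    have ha : 0 < a := hb.trans_lt hba
    have hab : IsCoprime a b := Int.isCoprime_iff_gcd_eq_one.2 hgcd
    have hpa : a ∣ b * p.1 + c := ⟨p.2, hp.symm.trans (mul_comm _ _)⟩
    have hqa : a ∣ b * q.1 + c := ⟨q.2, hq.symm.trans (mul_comm _ _)⟩
    have hne : p.1 ≠ q.1 := fun h =>
      hpq (Prod.ext h (mul_right_cancel₀ ha.ne' (hp.trans (h ▸ hq.symm))))
    refine ⟨hab, hb, hba, hc, hca, hdvd, ?_⟩
    rcases hne.lt_or_gt with h | h
    · exact exists_dvd_around_midpoint ha hab hp0 h hqn hpa hqa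
    · exact exists_dvd_around_midpoint ha hab hq0 h hpn hqa hpa
  · rintro ⟨hab, hb, hba, hc, hca, hdvd, k, l, hk, hl, hln, ⟨i, hi⟩, ⟨j, hj⟩⟩
    have hsep : a ≤ l - k :=
      Int.le_of_dvd (by omega) (dvd_sub_of_dvd_mul_add hab ⟨i, hi⟩ ⟨j, hj⟩)
    refine ⟨Int.isCoprime_iff_gcd_eq_one.1 hab, hb, hba, by dsimp only; omega, hc, hca, hdvd,
      (k, i), (l, j), fun h => ?_, ?_, ?_, ?_, ?_, ?_, ?_⟩
    · have := congrArg Prod.fst h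
      omega
    all_goals dsimp only
    all_goals first | omega | linarith

end LineHeight

section CentralGap

/-- `2a` times the vertical distance from the grid point `(k, S k)` up to the line of slope `b/a`
through `(n/2, (S n + 1)/2)`. For `S` the height function of a palindrome of length `n`, that point
is the centre of symmetry of the region between the graphs of `S` and `S + 1`. -/
def centralGap (n : ℕ) (S : ℕ → ℤ) (a b : ℤ) (k : ℕ) : ℤ :=
  b * (2 * k - n) - a * (2 * S k - S n - 1)

/-- The line of slope `b/a` through `(n/2, (S n + 1)/2)` lies strictly above the graph of `S` on
`[0, n]` (for `0 < a`). -/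
def IsCentralSlope (n : ℕ) (S : ℕ → ℤ) (a b : ℤ) : Prop :=
  ∀ k ≤ n, 0 < centralGap n S a b k

/-- `b/a` is a central slope of smallest positive denominator. -/
structure IsSimplestSlope (n : ℕ) (S : ℕ → ℤ) (a b : ℤ) : Prop where
  pos : 0 < a
  isCentralSlope : IsCentralSlope n S a b
  le_of_isCentralSlope : ∀ {v u : ℤ}, 0 < v → IsCentralSlope n S v u → a ≤ v

variable {n : ℕ} {S : ℕ → ℤ} {a b c u v : ℤ} {k : ℕ}

lemma centralGap_add_centralGap_sub (hS : IsCentrallySymmetric n S) (hk : k ≤ n) :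
    centralGap n S a b k + centralGap n S a b (n - k) = 2 * a := by
  rw [centralGap, centralGap, Nat.cast_sub hk]
  linear_combination -2 * a * hS k hk

lemma IsCentralSlope.centralGap_lt (h : IsCentralSlope n S a b) (hS : IsCentrallySymmetric n S)
    (hk : k ≤ n) : centralGap n S a b k < 2 * a := by
  linarith [centralGap_add_centralGap_sub (a := a) (b := b) hS hk, h (n - k) (n.sub_le k)]

lemma centralGap_eq_two_mul_add_one (hc : a * (S n + 1) = 2 * c + b * n + 1) (k : ℕ) :
    centralGap n S a b k = 2 * (b * k + c - a * S k) + 1 := by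
  rw [centralGap]
  linear_combination hc

lemma exists_intercept_iff_odd_centralGap :
    (∃ c, a * (S n + 1) = 2 * c + b * n + 1) ↔ Odd (centralGap n S a b k) := by
  constructor
  · rintro ⟨c, hc⟩
    exact ⟨_, centralGap_eq_two_mul_add_one hc k⟩
  · rintro ⟨e, he⟩
    rw [centralGap] at he
    exact ⟨e - b * k + a * S k, by linear_combination he⟩

lemma IsCentralSlope.lineHeight_eq (h : IsCentralSlope n S a b) (hS : IsCentrallySymmetric n S)
    (ha : 0 < a) (hc : a * (S n + 1) = 2 * c + b * n + 1) (hk : k ≤ n) :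
    lineHeight a b c k = S k := by
  have hpos := h k hk
  have hlt := h.centralGap_lt hS hk
  rw [centralGap_eq_two_mul_add_one hc] at hpos hlt
  rw [lineHeight_eq_iff ha]
  omega

lemma isCentralSlope_lineHeight (hc : 0 ≤ c) (hca : c < a) (hdvd : a ∣ 2 * c + b * n + 1) :
    IsCentralSlope n (lineHeight a b c) a b := by
  intro k _
  rw [centralGap_eq_two_mul_add_one (mul_lineHeight_add_one hc hca hdvd)]
  have := ((lineHeight_eq_iff (b := b) (c := c) (k := k) (hc.trans_lt hca)).1 rfl).1
  omega

lemma centralGap_lineHeight_eq_one (hc : 0 ≤ c) (hca : c < a) (hdvd : a ∣ 2 * c + b * n + 1)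
    (hk : a ∣ b * k + c) : centralGap n (lineHeight a b c) a b k = 1 := by
  rw [centralGap_eq_two_mul_add_one (mul_lineHeight_add_one hc hca hdvd), lineHeight,
    Int.mul_ediv_cancel' hk]
  ring

lemma mul_centralGap_sub_mul_centralGap :
    a * centralGap n S v u k - v * centralGap n S a b k = (2 * k - n) * (u * a - v * b) := by
  rw [centralGap, centralGap]
  ring

lemma IsCentralSlope.le_and_eq_of_centralGap_eq_one (h : IsCentralSlope n S v u) (ha : 0 < a)
    {l : ℕ} (hk : 2 * k < n) (hl : n < 2 * l) (hln : l ≤ n)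
    (hgap_k : centralGap n S a b k = 1) (hgap_l : centralGap n S a b l = 1) :
    a ≤ v ∧ (a = v → b = u) := by
  have heq_k := mul_centralGap_sub_mul_centralGap (n := n) (S := S) (a := a) (b := b) (v := v)
    (u := u) (k := k)
  have heq_l := mul_centralGap_sub_mul_centralGap (n := n) (S := S) (a := a) (b := b) (v := v)
    (u := u) (k := l)
  have hle_k : a ≤ a * centralGap n S v u k := le_mul_of_one_le_right ha.le (h k (by omega))
  have hle_l : a ≤ a * centralGap n S v u l := le_mul_of_one_le_right ha.le (h l hln)
  rw [hgap_k] at heq_k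
  rw [hgap_l] at heq_l
  have hk_neg : (2 * k - n : ℤ) < 0 := by omega
  have hl_pos : (0 : ℤ) < 2 * l - n := by omega
  rcases lt_trichotomy (u * a - v * b) 0 with hdet | hdet | hdet
  · have := mul_neg_of_pos_of_neg hl_pos hdet
    omega
  · rw [hdet, mul_zero] at heq_k
    refine ⟨by omega, ?_⟩
    rintro rfl
    exact mul_left_cancel₀ ha.ne' (by linarith)
  · have := mul_neg_of_neg_of_pos hk_neg hdet
    omega

lemma exists_isSimplestSlope (h : ∃ a b : ℤ, 0 < a ∧ IsCentralSlope n S a b) :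
    ∃ a b : ℤ, IsSimplestSlope n S a b := by
  have hnat : ∃ a : ℕ, 0 < a ∧ ∃ b : ℤ, IsCentralSlope n S a b := by
    obtain ⟨a, b, ha, hab⟩ := h
    lift a to ℕ using ha.le
    exact ⟨a, by exact_mod_cast ha, b, hab⟩
  obtain ⟨a, ⟨ha, b, hab⟩, hmin⟩ := exists_minimal_of_wellFoundedLT _ hnat
  refine ⟨a, b, by exact_mod_cast ha, hab, fun {v u} hv hvu => ?_⟩
  lift v to ℕ using hv.le
  by_contra! hva
  have hva' : v ≤ a := by exact_mod_cast hva.le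
  exact hva.not_ge (by exact_mod_cast hmin ⟨by exact_mod_cast hv, u, hvu⟩ hva')

namespace IsSimplestSlope

lemma isCoprime (h : IsSimplestSlope n S a b) : IsCoprime a b := by
  have hg : 0 < Int.gcd a b := Int.gcd_pos_of_ne_zero_left _ h.pos.ne'
  obtain ⟨v, u, -, hv, hu⟩ := Int.exists_gcd_one hg
  rw [Int.isCoprime_iff_gcd_eq_one]
  generalize Int.gcd a b = g at hg hv hu ⊢
  have hv_pos : 0 < v := pos_of_mul_pos_left (hv ▸ h.pos) g.cast_nonneg
  have hvu : IsCentralSlope n S v u := fun k hk => by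
    have hgap : centralGap n S a b k = g * centralGap n S v u k := by
      rw [centralGap, centralGap, hv, hu]
      ring
    exact pos_of_mul_pos_right (hgap ▸ h.isCentralSlope k hk) g.cast_nonneg
  have hg_le : (g : ℤ) ≤ 1 :=
    le_of_mul_le_mul_left (by linarith [h.le_of_isCentralSlope hv_pos hvu]) hv_pos
  omega

lemma lt (h : IsSimplestSlope n S a b) (hS0 : S 0 = 0) (hSn : S n < n) : b < a := by
  have hgap := h.isCentralSlope 0 n.zero_le
  rw [centralGap, hS0] at hgap
  have hle : a * (S n + 1) ≤ a * n := mul_le_mul_of_nonneg_left hSn h.pos.le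
  refine lt_of_mul_lt_mul_right ?_ n.cast_nonneg
  push_cast at hgap
  linarith

lemma nonneg (h : IsSimplestSlope n S a b) (hS : IsCentrallySymmetric n S)
    (hS_nonneg : ∀ k ≤ n, 0 ≤ S k) (hn : 0 < n) : 0 ≤ b := by
  by_contra! hb
  have hn' : (0 : ℤ) < n := by exact_mod_cast hn
  have hgap_n := h.isCentralSlope n le_rfl
  have hbn : b * n < 0 := mul_neg_of_neg_of_pos hb hn'
  rw [centralGap] at hgap_n
  have hSn : S n = 0 := by
    have : a * (S n - 1) < 0 := by linarith
    have := neg_of_mul_neg_right this h.pos.le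
    have := hS_nonneg n le_rfl
    omega
  have hzero : IsCentralSlope n S 1 0 := fun k hk => by
    have := hS k hk
    have := hS_nonneg k hk
    have := hS_nonneg (n - k) (n.sub_le k)
    rw [centralGap]
    omega
  have ha : a = 1 := le_antisymm (h.le_of_isCentralSlope one_pos hzero) h.pos
  rw [hSn, ha] at hgap_n
  nlinarith

lemma exists_centralGap_nonpos (h : IsSimplestSlope n S a b) (hv : 0 < v) (hva : v < a) (u : ℤ) :
    ∃ k ≤ n, centralGap n S v u k ≤ 0 := by
  by_contra! hpos
  exact hva.not_ge (h.le_of_isCentralSlope hv hpos)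

end IsSimplestSlope

lemma exists_mul_sub_mul_eq_one (ha : 1 < a) (hab : IsCoprime a b) :
    ∃ v u : ℤ, b * v - a * u = 1 ∧ 0 < v ∧ v < a := by
  obtain ⟨x, y, hxy⟩ := hab
  have hdet : b * (y % a) - a * (-x - b * (y / a)) = 1 := by
    linear_combination hxy + b * Int.mul_ediv_add_emod y a
  have hv_ne : y % a ≠ 0 := fun hv => by
    have : a ∣ 1 := ⟨x + b * (y / a), by rw [hv] at hdet; linarith⟩
    exact absurd (Int.le_of_dvd one_pos this) (by omega)
  exact ⟨y % a, _, hdet, (Int.emod_nonneg y (by omega)).lt_of_ne' hv_ne,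
    Int.emod_lt_of_pos y (by omega)⟩

lemma sub_eq_of_mul_sub_mul_eq_one (hdet : b * v - a * u = 1) :
    2 * k - n = centralGap n S a b k * v - centralGap n S v u k * a ∧
      2 * S k - S n - 1 = centralGap n S a b k * u - centralGap n S v u k * b := by
  rw [centralGap, centralGap]
  constructor
  · linear_combination (n - 2 * k : ℤ) * hdet
  · linear_combination (S n + 1 - 2 * S k) * hdet

lemma IsCentrallySymmetric.not_even_and_even (hS : IsCentrallySymmetric n S) :
    ¬ (Even (n : ℤ) ∧ Even (S n + 1)) := by
  rintro ⟨⟨x, hx⟩, ⟨y, hy⟩⟩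
  have hmid := hS (n / 2) (n.div_le_self 2)
  rw [show n - n / 2 = n / 2 by omega] at hmid
  omega

lemma IsCentralSlope.two_mul_apply_sub_eq (h : IsCentralSlope n S a b)
    (hS : IsCentrallySymmetric n S) (ha : 0 < a) {m : ℕ} (hmn : m ≤ n)
    (hm : 2 * (m : ℤ) = n + a) : 2 * S m - S n = b := by
  have hgap : centralGap n S a b m = a * (b - (2 * S m - S n - 1)) := by
    rw [centralGap]
    linear_combination b * hm
  have hpos := h m hmn
  have hlt := h.centralGap_lt hS hmn
  rw [hgap] at hpos hlt
  have hlower := pos_of_mul_pos_right hpos ha.le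
  have hupper := lt_of_mul_lt_mul_left (hlt.trans_eq (mul_comm 2 a)) ha.le
  omega

lemma IsSimplestSlope.exists_two_mul_eq_add_of_even (h : IsSimplestSlope n S a b)
    (hS : IsCentrallySymmetric n S) (ha : 1 < a) (heven : ∀ k, Even (centralGap n S a b k)) :
    (∃ m ≤ n, 2 * (m : ℤ) = n + a) ∧ Even (S n + 1 - b) := by
  obtain ⟨v, u, hdet, hv, hva⟩ := exists_mul_sub_mul_eq_one ha h.isCoprime
  obtain ⟨k, hk, hgap⟩ := h.exists_centralGap_nonpos hv hva u
  obtain ⟨hx, hy⟩ := sub_eq_of_mul_sub_mul_eq_one (n := n) (S := S) (k := k) hdet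
  have hpos := h.isCentralSlope k hk
  obtain ⟨d, hd⟩ := heven k
  have hodd : Odd (centralGap n S v u k) := by
    rw [← Int.not_even_iff_odd]
    rintro ⟨e, he⟩
    rw [hd, he] at hx hy
    exact hS.not_even_and_even ⟨⟨k - d * v + e * a, by linear_combination -hx⟩,
      ⟨S k - d * u + e * b, by linear_combination -hy⟩⟩
  obtain ⟨e, he⟩ := hodd
  rw [hd, he] at hx hy
  have han : a ≤ n := by
    have hdv : 0 ≤ (d + d) * v := mul_nonneg (by omega) hv.le
    have hea : a ≤ -(2 * e + 1) * a := le_mul_of_one_le_left h.pos.le (by omega)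
    linarith [(Nat.cast_le (α := ℤ)).2 hk]
  obtain ⟨m, hm⟩ := Int.eq_ofNat_of_zero_le (a := k - d * v + (e + 1) * a) (by linarith)
  have hm_mid : 2 * (m : ℤ) = n + a := by linear_combination hx - 2 * hm
  exact ⟨⟨m, by omega, hm_mid⟩, ⟨S k - d * u + e * b, by linear_combination -hy⟩⟩

/-- If all gaps were even, a left Farey parent of `b/a` would force `a ≤ n` and
`(n, S n + 1) ≡ (a, b)` modulo `2`. So the central line would meet the vertical at `(n + a)/2` in a
grid point, whereas its height there lies strictly between `S` and `S + 1`. -/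
lemma IsSimplestSlope.exists_odd_centralGap (h : IsSimplestSlope n S a b)
    (hS : IsCentrallySymmetric n S) : ∃ k, Odd (centralGap n S a b k) := by
  by_contra! heven
  simp only [Int.not_odd_iff_even] at heven
  rcases (show 1 ≤ a from h.pos).eq_or_lt with rfl | ha
  · have hpos := h.isCentralSlope 0 n.zero_le
    have hlt := h.isCentralSlope.centralGap_lt hS n.zero_le
    obtain ⟨e, he⟩ := heven 0
    omega
  obtain ⟨⟨m, hmn, hm⟩, ⟨e, he⟩⟩ := h.exists_two_mul_eq_add_of_even hS ha heven
  have hSm := h.isCentralSlope.two_mul_apply_sub_eq hS h.pos hmn hm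
  omega

/-- Subtracting `b k + c - a (S k)` copies of `(v, u)` moves `(k, S k)` onto the line
`y = (b/a)x + c/a`. -/
lemma dvd_and_sub_eq_of_mul_sub_mul_eq_one (hdet : b * v - a * u = 1)
    (hc : a * (S n + 1) = 2 * c + b * n + 1) :
    a ∣ b * (k - (b * k + c - a * S k) * v) + c ∧
      2 * (k - (b * k + c - a * S k) * v) - n = v - centralGap n S v u k * a := by
  constructor
  · exact ⟨S k - (b * k + c - a * S k) * u, by
      linear_combination (a * S k - b * k - c) * hdet⟩
  · have hx := (sub_eq_of_mul_sub_mul_eq_one (n := n) (S := S) (k := k) hdet).1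
    rw [centralGap_eq_two_mul_add_one hc] at hx
    linear_combination hx

namespace IsSimplestSlope

lemma exists_dvd_around_midpoint (h : IsSimplestSlope n S a b) (hn : 0 < n)
    (hc : a * (S n + 1) = 2 * c + b * n + 1) :
    ∃ k l : ℕ, 2 * k < n ∧ n < 2 * l ∧ l ≤ n ∧ a ∣ b * k + c ∧ a ∣ b * l + c := by
  rcases (show 1 ≤ a from h.pos).eq_or_lt with rfl | ha
  · exact ⟨0, n, by omega, by omega, le_rfl, one_dvd _, one_dvd _⟩
  have hslack : ∀ k ≤ n, 0 ≤ b * k + c - a * S k := fun k hk => by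
    have := h.isCentralSlope k hk
    rw [centralGap_eq_two_mul_add_one hc] at this
    omega
  obtain ⟨v, u, hdet, hv, hva⟩ := exists_mul_sub_mul_eq_one ha h.isCoprime
  obtain ⟨l, hl, hgap_l⟩ := h.exists_centralGap_nonpos hv hva u
  obtain ⟨hdvd_l, hx_l⟩ := dvd_and_sub_eq_of_mul_sub_mul_eq_one (k := l) hdet hc
  obtain ⟨k, hk, hgap_k⟩ := h.exists_centralGap_nonpos (sub_pos.2 hva) (by omega) (b - u)
  -- The right Farey parent is entered as `(u - b)/(v - a)`, so that it satisfies the same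
  -- determinant condition as the left one.
  have hdet' : b * (v - a) - a * (u - b) = 1 := by linear_combination hdet
  obtain ⟨hdvd_k, hx_k⟩ := dvd_and_sub_eq_of_mul_sub_mul_eq_one (k := k) hdet' hc
  have hgap_neg : centralGap n S (v - a) (u - b) k = -centralGap n S (a - v) (b - u) k := by
    rw [centralGap, centralGap]
    ring
  rw [hgap_neg] at hx_k
  have hshift_l := mul_nonneg (hslack l hl) hv.le
  have hshift_k := mul_nonneg (hslack k hk) (sub_pos.2 hva).le
  have hright := mul_nonneg (neg_nonneg.2 hgap_l) h.pos.le
  have hleft := mul_nonneg (neg_nonneg.2 hgap_k) h.pos.le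
  obtain ⟨i, hi⟩ := Int.eq_ofNat_of_zero_le
    (a := k - (b * k + c - a * S k) * (v - a)) (by linarith)
  obtain ⟨j, hj⟩ := Int.eq_ofNat_of_zero_le
    (a := l - (b * l + c - a * S l) * v) (by linarith)
  rw [hi] at hdvd_k hx_k
  rw [hj] at hdvd_l hx_l
  refine ⟨i, j, ?_, ?_, ?_, hdvd_k, hdvd_l⟩
  all_goals zify; linarith

lemma mem_palTriples (h : IsSimplestSlope n S a b) (hS : IsCentrallySymmetric n S)
    (hS_nonneg : ∀ k ≤ n, 0 ≤ S k) (hSn : S n < n)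
    (hc : a * (S n + 1) = 2 * c + b * n + 1) : (a, b, c) ∈ palTriples n := by
  have hn : 0 < n := by
    have := hS_nonneg n le_rfl
    omega
  have hc_bounds := h.isCentralSlope.lineHeight_eq hS h.pos hc n.zero_le
  rw [hS.apply_zero, lineHeight_eq_iff h.pos] at hc_bounds
  simp only [mul_zero, Nat.cast_zero, zero_add] at hc_bounds
  exact mem_palTriples_iff.2 ⟨h.isCoprime, h.nonneg hS hS_nonneg hn, h.lt hS.apply_zero hSn,
    hc_bounds.1, hc_bounds.2, ⟨S n + 1, hc.symm⟩, h.exists_dvd_around_midpoint hn hc⟩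

end IsSimplestSlope

lemma exists_mem_palTriples_lineHeight_eq (hS : IsCentrallySymmetric n S)
    (hS_nonneg : ∀ k ≤ n, 0 ≤ S k) (hSn : S n < n)
    (hslope : ∃ a b : ℤ, 0 < a ∧ IsCentralSlope n S a b) :
    ∃ t ∈ palTriples n, ∀ k ≤ n, lineHeight t.1 t.2.1 t.2.2 k = S k := by
  obtain ⟨a, b, h⟩ := exists_isSimplestSlope hslope
  obtain ⟨k, hodd⟩ := h.exists_odd_centralGap hS
  obtain ⟨c, hc⟩ := exists_intercept_iff_odd_centralGap.2 hodd
  exact ⟨(a, b, c), h.mem_palTriples hS hS_nonneg hSn hc,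
    fun _ hk => h.isCentralSlope.lineHeight_eq hS h.pos hc hk⟩

lemma exists_rat_forall_lt_mul {ι : Type*} (s : Finset ι) {x y : ι → ℝ} {α : ℝ}
    (h : ∀ i ∈ s, y i < α * x i) : ∃ q : ℚ, ∀ i ∈ s, y i < q * x i := by
  have hopen : IsOpen (⋂ i ∈ s, {β : ℝ | y i < β * x i}) :=
    isOpen_biInter_finset fun i _ => isOpen_lt continuous_const (by fun_prop)
  obtain ⟨q, hq⟩ := Rat.denseRange_cast.exists_mem_open hopen ⟨α, Set.mem_iInter₂.2 h⟩
  exact ⟨q, Set.mem_iInter₂.1 hq⟩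

lemma exists_isCentralSlope_of_floor {α ρ : ℝ} (hS : IsCentrallySymmetric n S)
    (hfloor : ∀ k ≤ n, S k = ⌊(k : ℝ) * α + ρ⌋) :
    ∃ a b : ℤ, 0 < a ∧ IsCentralSlope n S a b := by
  have hα : ∀ k ∈ Finset.Iic n, ((2 * S k - S n - 1 : ℤ) : ℝ) < α * (2 * k - n : ℤ) := by
    intro k hk
    rw [Finset.mem_Iic] at hk
    have hlower := Int.floor_le ((k : ℝ) * α + ρ)
    have hupper := Int.lt_floor_add_one (((n - k : ℕ) : ℝ) * α + ρ)
    rw [← hfloor k hk] at hlower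
    rw [← hfloor _ (n.sub_le k), Nat.cast_sub hk] at hupper
    rw [← hS k hk]
    push_cast
    linarith
  obtain ⟨q, hq⟩ := exists_rat_forall_lt_mul _ hα
  refine ⟨q.den, q.num, by exact_mod_cast q.pos, fun k hk => ?_⟩
  have hqk := hq k (Finset.mem_Iic.2 hk)
  have hden : (0 : ℝ) < q.den := by exact_mod_cast q.pos
  rw [Rat.cast_def, div_mul_eq_mul_div, lt_div_iff₀ hden, mul_comm] at hqk
  exact sub_pos.2 (by exact_mod_cast hqk)

end CentralGap

section TripleWord

/-- The word of length `n` coding the digital line `y = (b/a)x + c/a` of the triple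
`t = (a, b, c)`. -/
def tripleWord (n : ℕ) (t : ℤ × ℤ × ℤ) : List Bool :=
  wordOfHeights n (lineHeight t.1 t.2.1 t.2.2)

variable {n : ℕ} {s t : ℤ × ℤ × ℤ}

lemma length_tripleWord (n : ℕ) (t : ℤ × ℤ × ℤ) : (tripleWord n t).length = n :=
  length_wordOfHeights n _

lemma wordHeight_tripleWord (ht : t ∈ palTriples n) {k : ℕ} (hk : k ≤ n) :
    wordHeight (tripleWord n t) k = lineHeight t.1 t.2.1 t.2.2 k := by
  obtain ⟨-, hb, hba, -, hc, hca, -⟩ := ht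
  exact wordHeight_wordOfHeights (lineHeight_zero hc hca)
    (fun j _ => lineHeight_succ_eq_or hb hba j) hk

lemma tripleWord_mem_sturmianWords (ht : t ∈ palTriples n) : tripleWord n t ∈ sturmianWords n := by
  have hheight := fun k (hk : k ≤ n) => wordHeight_tripleWord ht hk
  obtain ⟨-, hb, hba, -, hc, hca, -⟩ := ht
  exact ⟨length_tripleWord n t,
    isFiniteSturmian_of_wordHeight_eq_lineHeight hb hba hc hca (by rwa [length_tripleWord])⟩

lemma reverse_tripleWord (ht : t ∈ palTriples n) :
    (tripleWord n t).reverse = tripleWord n t := by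
  rw [reverse_eq_self_iff_isCentrallySymmetric, length_tripleWord]
  intro k hk
  rw [wordHeight_tripleWord ht hk, wordHeight_tripleWord ht (n.sub_le k),
    wordHeight_tripleWord ht le_rfl]
  obtain ⟨-, -, -, -, hc, hca, hdvd, -⟩ := ht
  exact isCentrallySymmetric_lineHeight hc hca hdvd k hk

lemma tripleWord_ne_replicate (ht : t ∈ palTriples n) :
    tripleWord n t ≠ List.replicate n true := by
  intro h
  have hheight := wordHeight_tripleWord ht le_rfl
  rw [h, wordHeight_replicate_true] at hheight
  obtain ⟨-, hb, hba, han, -, hca, -⟩ := ht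
  exact (lineHeight_lt hba hca han (hb.trans_lt hba)).ne' hheight

lemma fst_le_and_eq_of_lineHeight_eq (hs : s ∈ palTriples n) (ht : t ∈ palTriples n)
    (h : ∀ k ≤ n, lineHeight s.1 s.2.1 s.2.2 k = lineHeight t.1 t.2.1 t.2.2 k) :
    s.1 ≤ t.1 ∧ (s.1 = t.1 → s.2.1 = t.2.1) := by
  have hslope : IsCentralSlope n (lineHeight s.1 s.2.1 s.2.2) t.1 t.2.1 := fun k hk => by
    obtain ⟨-, -, -, -, hc, hca, hdvd, -⟩ := ht
    rw [centralGap, h k hk, h n le_rfl]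
    exact isCentralSlope_lineHeight hc hca hdvd k hk
  obtain ⟨-, hb, hba, hc, hca, hdvd, k, l, hk, hl, hln, hk_dvd, hl_dvd⟩ := mem_palTriples_iff.1 hs
  exact hslope.le_and_eq_of_centralGap_eq_one (hb.trans_lt hba) hk hl hln
    (centralGap_lineHeight_eq_one hc hca hdvd hk_dvd)
    (centralGap_lineHeight_eq_one hc hca hdvd hl_dvd)

lemma eq_of_lineHeight_eq (hs : s ∈ palTriples n) (ht : t ∈ palTriples n)
    (h : ∀ k ≤ n, lineHeight s.1 s.2.1 s.2.2 k = lineHeight t.1 t.2.1 t.2.2 k) : s = t := by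
  obtain ⟨hle, heq⟩ := fst_le_and_eq_of_lineHeight_eq hs ht h
  have hge := (fst_le_and_eq_of_lineHeight_eq ht hs fun k hk => (h k hk).symm).1
  have ha : s.1 = t.1 := hle.antisymm hge
  obtain ⟨-, -, -, -, hcs, hcas, hdvds, -⟩ := hs
  obtain ⟨-, -, -, -, hct, hcat, hdvdt, -⟩ := ht
  have hs_last := mul_lineHeight_add_one hcs hcas hdvds
  rw [h n le_rfl, ha, heq ha, mul_lineHeight_add_one hct hcat hdvdt] at hs_last
  exact Prod.ext ha (Prod.ext (heq ha) (by linarith))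

lemma tripleWord_injOn (n : ℕ) : Set.InjOn (tripleWord n) (palTriples n) :=
  fun s hs t ht h => eq_of_lineHeight_eq hs ht fun k hk => by
    rw [← wordHeight_tripleWord hs hk, ← wordHeight_tripleWord ht hk, h]

lemma exists_tripleWord_eq {w : List Bool} (hw : w ∈ sturmianWords n) (hrev : w.reverse = w)
    (hne : w ≠ List.replicate n true) : ∃ t ∈ palTriples n, tripleWord n t = w := by
  obtain ⟨rfl, hsturm⟩ := hw
  obtain ⟨α, ρ, -, -, hfloor⟩ := isFiniteSturmian_iff_wordHeight_eq_floor.1 hsturm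
  have hsymm := reverse_eq_self_iff_isCentrallySymmetric.1 hrev
  obtain ⟨t, ht, hheight⟩ := exists_mem_palTriples_lineHeight_eq hsymm
    (fun k _ => wordHeight_nonneg w k) (wordHeight_length_lt hne)
    (exists_isCentralSlope_of_floor hsymm hfloor)
  refine ⟨t, ht, eq_of_wordHeight_eq (length_tripleWord _ t) fun k hk => ?_⟩
  rw [length_tripleWord] at hk
  rw [wordHeight_tripleWord ht hk, hheight k hk]

lemma tripleWord_bijOn (n : ℕ) :
    Set.BijOn (tripleWord n) (palTriples n)
      {w | w ∈ sturmianWords n ∧ w.reverse = w ∧ w ≠ List.replicate n true} :=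
  ⟨fun _ ht => ⟨tripleWord_mem_sturmianWords ht, reverse_tripleWord ht,
    tripleWord_ne_replicate ht⟩, tripleWord_injOn n,
    fun _ ⟨hw, hrev, hne⟩ => exists_tripleWord_eq hw hrev hne⟩

end TripleWord

/-- There are as many palindromic finite Sturmian words of length `n` other than
`1^n` as there are triples `(a,b,c)` as above. -/
theorem palindrome_triple_correspondence (n : ℕ) (hn : 1 ≤ n) :
    {w | w ∈ sturmianWords n ∧ w.reverse = w ∧ w ≠ List.replicate n true}.ncard =
      (palTriples n).ncard :=
  (tripleWord_bijOn n).ncard_eq.symm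
end

section
/- Let a ≥ 1 and 0 ≤ b < a be integers with gcd(a,b) = 1, let m ≥ 1 be an integer, and let c1 ≤ c2 be integers with 0 ≤ c1 ≤ c2 < a such that for every integer c', u(c') = u(c1) if and only if the residue of c' modulo a lies in [c1, c2]. Then for every integer c' with c1 ≤ c' ≤ c2, there exists an integer x with 0 ≤ x ≤ m and bx + c' ≡ a − 1 (mod a) if and only if c' = c2. -/
/-- The `k`-th letter `⌊(b(k+1)+c)/a⌋ - ⌊(bk+c)/a⌋` of the word defined by the line
`y = (b/a)x + c/a`. -/
noncomputable def lineLetter (a b c : ℤ) (k : ℕ) : ℤ :=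
  ⌊((b * ((k : ℤ) + 1) + c : ℤ) : ℝ) / (a : ℝ)⌋ - ⌊((b * (k : ℤ) + c : ℤ) : ℝ) / (a : ℝ)⌋

/-!
Raising the intercept numerator from `c` to `c + 1` changes `⌊(bx + c)/a⌋` exactly at those `x`
with `a ∣ bx + c + 1`, where it grows by one. Hence the two words of length `m` agree if and only
if this divisibility holds at all or at none of the abscissas `0, …, m`. When `a ∤ c + 1` it fails
at `0`, so the words agree exactly when the line with intercept `c/a` avoids the points
`y ≡ (a-1)/a (mod 1)` over `[0, m]`. The remaining intercept `c = a - 1` is the topmost of all, and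
its line meets such a point at `x = 0`.
-/

theorem emod_eq_sub_one_emod_iff_dvd {a n : ℤ} : n % a = (a - 1) % a ↔ a ∣ n + 1 := by
  rw [Int.emod_eq_emod_iff_emod_sub_eq_zero, ← Int.dvd_iff_emod_eq_zero,
    show n - (a - 1) = n + 1 - a by ring, dvd_sub_self_right]

theorem add_one_ediv_eq_add_ite {a : ℤ} (ha : 0 < a) (n : ℤ) :
    (n + 1) / a = n / a + if a ∣ n + 1 then 1 else 0 := by
  have hdiv := Int.emod_add_mul_ediv n a
  have hnonneg := Int.emod_nonneg n ha.ne'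
  have hlt := Int.emod_lt_of_pos n ha
  have hlast : a ∣ n + 1 ↔ n % a = a - 1 := by
    rw [← emod_eq_sub_one_emod_iff_dvd, Int.emod_eq_of_lt (a := a - 1) (by omega) (by omega)]
  split_ifs with h
  · rw [hlast] at h
    exact ((Int.ediv_emod_unique (r := 0) ha).2 ⟨by linarith, le_rfl, ha⟩).1
  · rw [hlast] at h
    exact ((Int.ediv_emod_unique (r := n % a + 1) ha).2 ⟨by linarith, by omega, by omega⟩).1

section Word

variable {a : ℤ} (b c : ℤ)

theorem lineLetter_eq_ediv_sub_ediv (ha : 0 ≤ a) (k : ℕ) :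
    lineLetter a b c k = (b * (k + 1) + c) / a - (b * k + c) / a := by
  simp only [lineLetter, Int.floor_div_cast_of_nonneg ha, Int.floor_intCast]

theorem lineLetter_add_one (ha : 0 < a) (k : ℕ) :
    lineLetter a b (c + 1) k = lineLetter a b c k +
      ((if a ∣ b * (k + 1) + c + 1 then 1 else 0) - if a ∣ b * k + c + 1 then 1 else 0) := by
  simp only [lineLetter_eq_ediv_sub_ediv b _ ha.le, ← add_assoc, add_one_ediv_eq_add_ite ha]
  ring

theorem lineLetter_add_one_eq_iff (ha : 0 < a) (k : ℕ) :
    lineLetter a b (c + 1) k = lineLetter a b c k ↔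
      (a ∣ b * (k + 1) + c + 1 ↔ a ∣ b * k + c + 1) := by
  rw [lineLetter_add_one b c ha]
  split_ifs <;> simp [*]

theorem forall_lineLetter_add_one_eq_iff (ha : 0 < a) (m : ℕ) :
    (∀ k < m, lineLetter a b (c + 1) k = lineLetter a b c k) ↔
      ∀ x : ℕ, x ≤ m → (a ∣ b * x + c + 1 ↔ a ∣ c + 1) := by
  simp only [lineLetter_add_one_eq_iff b c ha]
  constructor
  · intro hstep x hx
    induction x with
    | zero => simp
    | succ x ih =>
      push_cast
      exact (hstep x hx).trans (ih (Nat.le_of_succ_le hx))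
  · intro hconst k hk
    exact_mod_cast (hconst (k + 1) hk).trans (hconst k hk.le).symm

theorem forall_lineLetter_add_one_eq_iff_not_exists (ha : 0 < a) (hc : ¬ a ∣ c + 1) (m : ℕ) :
    (∀ k < m, lineLetter a b (c + 1) k = lineLetter a b c k) ↔
      ¬ ∃ x : ℤ, 0 ≤ x ∧ x ≤ m ∧ (b * x + c) % a = (a - 1) % a := by
  simp only [forall_lineLetter_add_one_eq_iff b c ha, hc, iff_false,
    emod_eq_sub_one_emod_iff_dvd]
  push Not
  constructor
  · intro h x hx0 hxm
    lift x to ℕ using hx0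
    exact h x (by exact_mod_cast hxm)
  · intro h x hx
    exact h x (by positivity) (by exact_mod_cast hx)

end Word

theorem top_line_meets_grid_general (a b : ℤ) (m : ℕ) (c1 c2 : ℤ) (hc1 : 0 ≤ c1) (hc2 : c2 < a)
    (hchar : ∀ c' : ℤ,
      (∀ k : ℕ, k < m → lineLetter a b c' k = lineLetter a b c1 k) ↔
        (c1 ≤ c' % a ∧ c' % a ≤ c2))
    (c' : ℤ) (hl : c1 ≤ c') (hu : c' ≤ c2) :
    (∃ x : ℤ, 0 ≤ x ∧ x ≤ (m : ℤ) ∧ (b * x + c') % a = (a - 1) % a) ↔ c' = c2 := by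
  have ha : 0 < a := by omega
  by_cases hdvd : a ∣ c' + 1
  · have hlast : a ≤ c' + 1 := Int.le_of_dvd (by omega) hdvd
    have hmeets : (b * 0 + c') % a = (a - 1) % a := by
      simpa only [mul_zero, zero_add, emod_eq_sub_one_emod_iff_dvd] using hdvd
    exact iff_of_true ⟨0, le_rfl, m.cast_nonneg, hmeets⟩ (by omega)
  have hne : c' + 1 ≠ a := fun h => hdvd h.symm.dvd
  have hword : ∀ k < m, lineLetter a b c' k = lineLetter a b c1 k := by
    rw [hchar, Int.emod_eq_of_lt (by omega) (by omega)]
    exact ⟨hl, hu⟩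
  have hnext : (∀ k < m, lineLetter a b (c' + 1) k = lineLetter a b c' k) ↔ c' + 1 ≤ c2 := by
    rw [forall₂_congr fun k hk => by rw [hword k hk], hchar,
      Int.emod_eq_of_lt (by omega) (by omega)]
    exact and_iff_right (by omega)
  rw [forall_lineLetter_add_one_eq_iff_not_exists b c' ha hdvd] at hnext
  rw [← not_iff_not, hnext]
  omega

/-- Among the lines `y = (b/a)x + c'/a` with `c1 ≤ c' ≤ c2` representing a fixed
word of length `m`, only the one with `c' = c2` passes through a point `(x,y)`
with `0 ≤ x ≤ m` and `y ≡ (a-1)/a (mod 1)`, i.e. `bx + c' ≡ a-1 (mod a)`. -/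
theorem top_line_meets_grid (a b : ℤ) (ha : 1 ≤ a) (hb0 : 0 ≤ b) (hba : b < a)
    (hgcd : Int.gcd a b = 1) (m : ℕ) (hm : 1 ≤ m) (c1 c2 : ℤ)
    (hc1 : 0 ≤ c1) (hc12 : c1 ≤ c2) (hc2 : c2 < a)
    (hchar : ∀ c' : ℤ,
      (∀ k : ℕ, k < m → lineLetter a b c' k = lineLetter a b c1 k) ↔
        (c1 ≤ c' % a ∧ c' % a ≤ c2)) :
    ∀ c' : ℤ, c1 ≤ c' → c' ≤ c2 →
      ((∃ x : ℤ, 0 ≤ x ∧ x ≤ (m : ℤ) ∧ (b * x + c') % a = (a - 1) % a) ↔ c' = c2) := by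
  exact top_line_meets_grid_general a b m c1 c2 hc1 hc2 hchar
end

section
/- Let ω be an infinite binary word and let u be a factor of ω that occurs at infinitely many positions in ω. If u has exactly one return word in ω, then ω is eventually periodic, i.e., there exist an integer N ≥ 0 and an integer p ≥ 1 such that ω_{k+p} = ω_k for all k ≥ N. -/
/-! Since `u` occurs infinitely often, each of its occurrences is followed by a next one, and the
word read from the former up to the latter is a return word. If `v` is the only return word, then
from any occurrence of `u` on, `ω` is the concatenation `v v v ⋯`. -/

theorem exists_length_eq_and_occursAt (ω : ℕ → Bool) (i n : ℕ) :
    ∃ w : List Bool, w.length = n ∧ OccursAt w ω i :=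
  ⟨List.ofFn fun k : Fin n => ω (i + k), List.length_ofFn, fun k _ => by simp⟩

theorem OccursAt.append {ω : ℕ → Bool} {v u : List Bool} {i : ℕ} (hv : OccursAt v ω i)
    (hu : OccursAt u ω (i + v.length)) : OccursAt (v ++ u) ω i := by
  intro k hk
  rw [List.get_eq_getElem, List.getElem_append]
  split_ifs with hkv
  · exact hv k hkv
  · rw [List.length_append] at hk
    exact (hu (k - v.length) (by lia)).trans (congrArg ω (by lia))

theorem OccursAt.prefix_drop_iff {ω : ℕ → Bool} {w u : List Bool} {i k : ℕ}
    (hw : OccursAt w ω i) (hk : k + u.length ≤ w.length) :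
    u <+: w.drop k ↔ OccursAt u ω (i + k) := by
  have hletter (j : ℕ) (hj : j < u.length) : w[k + j] = ω (i + k + j) :=
    (hw (k + j) (by lia)).trans (congrArg ω (by lia))
  rw [List.prefix_iff_getElem]
  constructor
  · rintro ⟨_, hpre⟩ j hj
    rw [List.get_eq_getElem, hpre j hj, List.getElem_drop, hletter j hj]
  · intro hu
    refine ⟨by rw [List.length_drop]; lia, fun j hj => ?_⟩
    rw [List.getElem_drop, hletter j hj]
    exact hu j hj

theorem isReturnWord_of_occursAt {ω : ℕ → Bool} {u v : List Bool} {i : ℕ} (hv_ne : v ≠ [])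
    (hv : OccursAt v ω i) (hstart : OccursAt u ω i) (hend : OccursAt u ω (i + v.length))
    (hbetween : ∀ k, 0 < k → k < v.length → ¬ OccursAt u ω (i + k)) :
    IsReturnWord ω u v := by
  have hvu : OccursAt (v ++ u) ω i := hv.append hend
  have hpos : 0 < v.length := List.length_pos_iff.2 hv_ne
  have hprefix : u <+: v ++ u := by
    simpa using (hvu.prefix_drop_iff (u := u) (k := 0) (by simp)).2 hstart
  have hoccs : {k : ℕ | k + u.length ≤ (v ++ u).length ∧ u <+: (v ++ u).drop k} =
      {0, v.length} := by
    ext k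
    simp only [Set.mem_ofPred_eq, Set.mem_insert_iff, Set.mem_singleton_iff]
    constructor
    · rintro ⟨hk, hpre⟩
      have hocc : OccursAt u ω (i + k) := (hvu.prefix_drop_iff hk).1 hpre
      rw [List.length_append] at hk
      by_contra! hne
      exact hbetween k (by lia) (by lia) hocc
    · rintro (rfl | rfl)
      · exact ⟨by simp, hprefix⟩
      · simp
  exact ⟨hv_ne, ⟨i, hvu⟩, hprefix, List.suffix_append v u, by rw [hoccs, Set.ncard_pair hpos.ne]⟩

theorem exists_isReturnWord_and_occursAt {ω : ℕ → Bool} {u : List Bool} {i j : ℕ} (hij : i < j)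
    (hi : OccursAt u ω i) (hj : OccursAt u ω j) :
    ∃ v, IsReturnWord ω u v ∧ OccursAt v ω i ∧ OccursAt u ω (i + v.length) := by
  classical
  have hnext : ∃ d, 0 < d ∧ OccursAt u ω (i + d) :=
    ⟨j - i, Nat.sub_pos_of_lt hij, by rwa [Nat.add_sub_cancel' hij.le]⟩
  obtain ⟨v, hlen, hv⟩ := exists_length_eq_and_occursAt ω i (Nat.find hnext)
  obtain ⟨hpos, hend⟩ : 0 < v.length ∧ OccursAt u ω (i + v.length) :=
    hlen ▸ Nat.find_spec hnext
  refine ⟨v, isReturnWord_of_occursAt (List.length_pos_iff.1 hpos) hv hi hend ?_, hv, hend⟩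
  exact fun k hk hkv hocc => Nat.find_min hnext (hlen ▸ hkv) ⟨hk, hocc⟩

theorem apply_add_length_of_forall_occursAt {ω : ℕ → Bool} {v : List Bool} {N : ℕ}
    (hv : ∀ m, OccursAt v ω (N + m * v.length)) {k : ℕ} (hk : N ≤ k) :
    ω (k + v.length) = ω k := by
  obtain rfl | hne := eq_or_ne v []
  · rfl
  obtain ⟨n, rfl⟩ := Nat.exists_eq_add_of_le hk
  have hr : n % v.length < v.length := Nat.mod_lt n (List.length_pos_iff.2 hne)
  have hn : n / v.length * v.length + n % v.length = n := Nat.div_add_mod' n v.length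
  calc
    ω (N + n + v.length) = ω (N + (n / v.length + 1) * v.length + n % v.length) := by
      rw [Nat.add_one_mul]
      congr 1
      lia
    _ = v.get ⟨n % v.length, hr⟩ := (hv _ _ hr).symm
    _ = ω (N + n / v.length * v.length + n % v.length) := hv _ _ hr
    _ = ω (N + n) := by rw [Nat.add_assoc, hn]

/-- If a factor `u` occurring infinitely often in an infinite binary word `ω` has
exactly one return word, then `ω` is eventually periodic. -/
theorem one_return_eventually_periodic (ω : ℕ → Bool) (u : List Bool)
    (hu : {i : ℕ | OccursAt u ω i}.Infinite)
    (hret : ∃! v : List Bool, IsReturnWord ω u v) :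
    ∃ N : ℕ, ∃ p : ℕ, 1 ≤ p ∧ ∀ k : ℕ, N ≤ k → ω (k + p) = ω k := by
  obtain ⟨v, hv, huniq⟩ := hret
  have hstep (i : ℕ) (hi : OccursAt u ω i) : OccursAt v ω i ∧ OccursAt u ω (i + v.length) := by
    obtain ⟨j, hj, hij⟩ := hu.exists_gt i
    obtain ⟨w, hw, hocc⟩ := exists_isReturnWord_and_occursAt hij hi hj
    exact huniq w hw ▸ hocc
  obtain ⟨N, hN⟩ := hu.nonempty
  have hocc (m : ℕ) : OccursAt u ω (N + m * v.length) := by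
    induction m with
    | zero => simpa using hN
    | succ m ih => simpa only [Nat.add_one_mul, Nat.add_assoc] using (hstep _ ih).2
  exact ⟨N, v.length, List.length_pos_iff.2 hv.1, fun k hk =>
    apply_add_length_of_forall_occursAt (fun m => (hstep _ (hocc m)).1) hk⟩
end
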